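/- (No vanishing for minimizing sequences) Let k be a nonzero integer and let {φ_n} ⊂ X satisfy d(φ_n) = k for all n and sup_n ∫_{ℝ³} f_n dx < ∞, where f_n = |∇φ_n|² + |A(φ_n)|² + |φ_n − P|⁶. Then vanishing cannot occur: it is not the case that for every R > 0, lim_{n→∞} sup_{y ∈ ℝ³} ∫_{B(y,R)} f_n dx = 0; i.e., there exist R > 0, δ > 0 and a subsequence along which sup_{y ∈ ℝ³} ∫_{B(y,R)} f_n dx ≥ δ. -/

import Mathlib

/- Common setting: Skyrme maps φ : ℝ³ → S³ ⊂ ℝ⁴ with weak partial derivatives. -/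

open MeasureTheory Real Filter
open scoped Topology ENNReal BigOperators

noncomputable section

abbrev R3 : Type := Fin 3 → ℝ
abbrev R4 : Type := Fin 4 → ℝ

/-- Euclidean dot product on ℝ⁴. -/
def dot (u v : R4) : ℝ := ∑ a, u a * v a

/-- Squared Euclidean norm on ℝ⁴. -/
def nsq (u : R4) : ℝ := dot u u

/-- |u∧v|² = |u|²|v|² − ⟨u,v⟩². -/
def wedgeSq (u v : R4) : ℝ := nsq u * nsq v - (dot u v) ^ 2

/-- Gram determinant of three vectors of ℝ⁴. -/
def gram (u v w : R4) : ℝ :=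
  Matrix.det !![dot u u, dot u v, dot u w; dot v u, dot v v, dot v w; dot w u, dot w v, dot w w]

/-- Determinant of the 4×4 matrix with columns a, b, c, d. -/
def det4 (a b c d : R4) : ℝ := Matrix.det (Matrix.of fun i j => ![a, b, c, d] j i)

/-- Smooth compactly supported test functions on ℝ³. -/
def IsTestFun {E : Type*} [NormedAddCommGroup E] [NormedSpace ℝ E] (ψ : R3 → E) : Prop :=
  ContDiff ℝ (⊤ : ℕ∞) ψ ∧ HasCompactSupport ψ

/-- A weakly differentiable map φ : ℝ³ → S³ ⊂ ℝ⁴ together with its weak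
partial derivatives `pderiv i = ∂ᵢφ`. -/
structure SkyrmeMap where
  toFun : R3 → R4
  pderiv : Fin 3 → R3 → R4
  meas : Measurable toFun
  pderiv_locInt : ∀ i, LocallyIntegrable (pderiv i) volume
  sphere : ∀ᵐ x : R3, nsq (toFun x) = 1
  weak : ∀ (i : Fin 3) (a : Fin 4) (ψ : R3 → ℝ), IsTestFun ψ →
    ∫ x : R3, fderiv ℝ ψ x (Pi.single i 1) * toFun x a
      = - ∫ x : R3, ψ x * pderiv i x a

/-- |∇φ|² = Σᵢ |∂ᵢφ|². -/
def gradSq (φ : SkyrmeMap) (x : R3) : ℝ := ∑ i, nsq (φ.pderiv i x)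

/-- |A(φ)|² = Σᵢⱼ |∂ᵢφ∧∂ⱼφ|². -/
def ASq (φ : SkyrmeMap) (x : R3) : ℝ := ∑ i, ∑ j, wedgeSq (φ.pderiv i x) (φ.pderiv j x)

/-- The Skyrme energy density |∇φ|² + |A(φ)|². -/
def energyDensity (φ : SkyrmeMap) (x : R3) : ℝ := gradSq φ x + ASq φ x

/-- φ ∈ X : finite Skyrme energy. -/
def memX (φ : SkyrmeMap) : Prop := Integrable (energyDensity φ) volume

/-- The Skyrme energy ℰ(φ). -/
def energy (φ : SkyrmeMap) : ℝ := ∫ x, energyDensity φ x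

/-- det(φ, ∇φ)(x). -/
def detDen (φ : SkyrmeMap) (x : R3) : ℝ :=
  det4 (φ.toFun x) (φ.pderiv 0 x) (φ.pderiv 1 x) (φ.pderiv 2 x)

/-- The topological degree d(φ) = (1/(2π²)) ∫ det(φ,∇φ). -/
def degree (φ : SkyrmeMap) : ℝ := (1 / (2 * π ^ 2)) * ∫ x, detDen φ x

/-- I_k = inf of the energy over maps of degree k. -/
def Skyrme.I (k : ℤ) : ℝ :=
  sInf {E : ℝ | ∃ φ : SkyrmeMap, memX φ ∧ degree φ = (k : ℝ) ∧ energy φ = E}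

/-- The north pole P = (0,0,0,1) of S³. -/
def northPole : R4 := ![0, 0, 0, 1]

/-- The Euclidean ball B(y,r) in ℝ³. -/
def eball (y : R3) (r : ℝ) : Set R3 := {x | ∑ i, (x i - y i) ^ 2 < r ^ 2}

/-! ### Part 1: pointwise algebra -/

/-- 3×3 minors of three vectors of ℝ⁴. -/
def minor3 (p q r : R4) (b c d : Fin 4) : ℝ :=
  p b * (q c * r d - q d * r c) - p c * (q b * r d - q d * r b) + p d * (q b * r c - q c * r b)

lemma det4_expand (a p q r : R4) :
    det4 a p q r = a 0 * minor3 p q r 1 2 3 - a 1 * minor3 p q r 0 2 3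
      + a 2 * minor3 p q r 0 1 3 - a 3 * minor3 p q r 0 1 2 := by
  unfold det4 minor3
  rw [Matrix.det_succ_column_zero]
  simp [Fin.sum_univ_succ, Matrix.det_fin_three, Fin.succAbove, Matrix.submatrix]
  ring

lemma dot_expand (u v : R4) : dot u v = u 0 * v 0 + u 1 * v 1 + u 2 * v 2 + u 3 * v 3 := by
  simp [dot, Fin.sum_univ_four]

lemma three_mul_det (a p q r : R4) (h : nsq a = 1) (h0 : dot a p = 0) (h1 : dot a q = 0)
    (h2 : dot a r = 0) :
    a 0 * det4 a p q r = minor3 p q r 1 2 3 ∧ a 1 * det4 a p q r = - minor3 p q r 0 2 3 ∧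
    a 2 * det4 a p q r = minor3 p q r 0 1 3 ∧ a 3 * det4 a p q r = - minor3 p q r 0 1 2 := by
  rw [det4_expand]
  simp only [nsq, dot_expand] at h h0 h1 h2
  unfold minor3
  have key : ∀ b c d e : Fin 4, a b * a b + a c * a c + a d * a d + a e * a e = 1 →
      a b * p b + a c * p c + a d * p d + a e * p e = 0 →
      a b * q b + a c * q c + a d * q d + a e * q e = 0 →
      a b * r b + a c * r c + a d * r d + a e * r e = 0 →
      a b * (a b * minor3 p q r c d e - a c * minor3 p q r b d e
      + a d * minor3 p q r b c e - a e * minor3 p q r b c d) = minor3 p q r c d e := by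
    intro b c d e k k0 k1 k2
    unfold minor3
    linear_combination (p c * (q d * r e - q e * r d) - p d * (q c * r e - q e * r c) + p e * (q c * r d - q d * r c)) * k
      - (a c * (q d * r e - q e * r d) - a d * (q c * r e - q e * r c) + a e * (q c * r d - q d * r c)) * k0
      + (a c * (p d * r e - p e * r d) - a d * (p c * r e - p e * r c) + a e * (p c * r d - p d * r c)) * k1
      - (a c * (p d * q e - p e * q d) - a d * (p c * q e - p e * q c) + a e * (p c * q d - p d * q c)) * k2
  refine ⟨?_, ?_, ?_, ?_⟩
  · have := key 0 1 2 3 (by linarith) (by linarith) (by linarith) (by linarith)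
    unfold minor3 at this; linarith
  · have := key 1 0 2 3 (by linarith) (by linarith) (by linarith) (by linarith)
    unfold minor3 at this; linarith
  · have := key 2 0 1 3 (by linarith) (by linarith) (by linarith) (by linarith)
    unfold minor3 at this; linarith
  · have := key 3 0 1 2 (by linarith) (by linarith) (by linarith) (by linarith)
    unfold minor3 at this; linarith

lemma nsq_nonneg (u : R4) : 0 ≤ nsq u := by
  simp only [nsq, dot_expand]; nlinarith [mul_self_nonneg (u 0), mul_self_nonneg (u 1), mul_self_nonneg (u 2), mul_self_nonneg (u 3)]

lemma sq_le_nsq (u : R4) (a : Fin 4) : u a ^ 2 ≤ nsq u := by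
  simp only [nsq, dot_expand]
  fin_cases a <;> simp <;> nlinarith [mul_self_nonneg (u 0), mul_self_nonneg (u 1), mul_self_nonneg (u 2), mul_self_nonneg (u 3)]

lemma wedge_expand (u v : R4) : wedgeSq u v =
    (u 0 * v 1 - u 1 * v 0)^2 + (u 0 * v 2 - u 2 * v 0)^2 + (u 0 * v 3 - u 3 * v 0)^2
    + (u 1 * v 2 - u 2 * v 1)^2 + (u 1 * v 3 - u 3 * v 1)^2 + (u 2 * v 3 - u 3 * v 2)^2 := by
  simp only [wedgeSq, nsq, dot_expand]; ring

lemma wedge_nonneg (u v : R4) : 0 ≤ wedgeSq u v := by rw [wedge_expand]; positivity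

lemma minor2_le (u v : R4) (b c : Fin 4) : (u b * v c - u c * v b)^2 ≤ wedgeSq u v := by
  have e : ∀ x y : ℝ, (x - y)^2 = (y-x)^2 := fun x y => by ring
  rw [wedge_expand]
  have h1 := sq_nonneg (u 0 * v 1 - u 1 * v 0)
  have h2 := sq_nonneg (u 0 * v 2 - u 2 * v 0)
  have h3 := sq_nonneg (u 0 * v 3 - u 3 * v 0)
  have h4 := sq_nonneg (u 1 * v 2 - u 2 * v 1)
  have h5 := sq_nonneg (u 1 * v 3 - u 3 * v 1)
  have h6 := sq_nonneg (u 2 * v 3 - u 3 * v 2)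
  fin_cases b <;> fin_cases c <;> simp <;> nlinarith

lemma minor3_sq (p q r : R4) (b c d : Fin 4) (s : ℝ) (hs : 0 ≤ s)
    (h1 : wedgeSq p q ≤ s^2) (h2 : wedgeSq p r ≤ s^2) (h3 : wedgeSq q r ≤ s^2) :
    (minor3 p q r b c d)^2 ≤ 6 * s^3 := by
  have ab : ∀ (u v : R4) (i j : Fin 4), wedgeSq u v ≤ s^2 → |u i * v j - u j * v i| ≤ s := by
    intro u v i j h
    exact abs_le_of_sq_le_sq ((minor2_le u v i j).trans h) hs
  have tri : ∀ x y z : ℝ, |x| ≤ s → |y| ≤ s → |z| ≤ s → |x*y*z| ≤ s^3 := by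
    intro x y z hx hy hz
    rw [abs_mul, abs_mul]
    calc |x| * |y| * |z| ≤ s * s * s := by gcongr
      _ = s^3 := by ring
  have e : (minor3 p q r b c d)^2 =
      (p b * q c - p c * q b) * (p b * r d - p d * r b) * (q c * r d - q d * r c)
      - (p b * q c - p c * q b) * (p c * r d - p d * r c) * (q b * r d - q d * r b)
      - (p b * q d - p d * q b) * (p b * r c - p c * r b) * (q c * r d - q d * r c)
      + (p b * q d - p d * q b) * (p c * r d - p d * r c) * (q b * r c - q c * r b)
      + (p c * q d - p d * q c) * (p b * r c - p c * r b) * (q b * r d - q d * r b)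
      - (p c * q d - p d * q c) * (p b * r d - p d * r b) * (q b * r c - q c * r b) := by
    unfold minor3; ring
  have t1 := abs_le.1 (tri _ _ _ (ab p q b c h1) (ab p r b d h2) (ab q r c d h3))
  have t2 := abs_le.1 (tri _ _ _ (ab p q b c h1) (ab p r c d h2) (ab q r b d h3))
  have t3 := abs_le.1 (tri _ _ _ (ab p q b d h1) (ab p r b c h2) (ab q r c d h3))
  have t4 := abs_le.1 (tri _ _ _ (ab p q b d h1) (ab p r c d h2) (ab q r b c h3))
  have t5 := abs_le.1 (tri _ _ _ (ab p q c d h1) (ab p r b c h2) (ab q r b d h3))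
  have t6 := abs_le.1 (tri _ _ _ (ab p q c d h1) (ab p r b d h2) (ab q r b c h3))
  rw [e]; linarith [t1.1, t1.2, t2.1, t2.2, t3.1, t3.2, t4.1, t4.2, t5.1, t5.2, t6.1, t6.2]

lemma ASq_nonneg (φ : SkyrmeMap) (x : R3) : 0 ≤ ASq φ x :=
  Finset.sum_nonneg fun _ _ => Finset.sum_nonneg fun _ _ => wedge_nonneg _ _

lemma gradSq_nonneg (φ : SkyrmeMap) (x : R3) : 0 ≤ gradSq φ x :=
  Finset.sum_nonneg fun _ _ => nsq_nonneg _

lemma wedge_le_ASq (φ : SkyrmeMap) (x : R3) (i j : Fin 3) :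
    wedgeSq (φ.pderiv i x) (φ.pderiv j x) ≤ ASq φ x := by
  unfold ASq
  refine le_trans ?_ (Finset.single_le_sum (f := fun i => ∑ j, wedgeSq (φ.pderiv i x) (φ.pderiv j x))
    (fun _ _ => Finset.sum_nonneg fun _ _ => wedge_nonneg _ _) (Finset.mem_univ i))
  exact Finset.single_le_sum (f := fun j => wedgeSq (φ.pderiv i x) (φ.pderiv j x))
    (fun _ _ => wedge_nonneg _ _) (Finset.mem_univ j)

lemma nsq_le_gradSq (φ : SkyrmeMap) (x : R3) (i : Fin 3) :
    nsq (φ.pderiv i x) ≤ gradSq φ x :=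
  Finset.single_le_sum (f := fun i => nsq (φ.pderiv i x)) (fun _ _ => nsq_nonneg _) (Finset.mem_univ i)

lemma ASq_le_gradSq_sq (φ : SkyrmeMap) (x : R3) : ASq φ x ≤ gradSq φ x ^ 2 := by
  unfold ASq gradSq
  rw [sq, Finset.sum_mul_sum]
  refine Finset.sum_le_sum fun i _ => Finset.sum_le_sum fun j _ => ?_
  unfold wedgeSq; nlinarith [sq_nonneg (dot (φ.pderiv i x) (φ.pderiv j x))]

lemma energyDensity_nonneg (φ : SkyrmeMap) (x : R3) : 0 ≤ energyDensity φ x :=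
  add_nonneg (gradSq_nonneg φ x) (ASq_nonneg φ x)

lemma detDen_sq (φ : SkyrmeMap) (x : R3) (h : nsq (φ.toFun x) = 1)
    (ho : ∀ i, dot (φ.toFun x) (φ.pderiv i x) = 0) :
    (detDen φ x)^2 ≤ 24 * (Real.sqrt (ASq φ x))^3 := by
  obtain ⟨e0, e1, e2, e3⟩ := three_mul_det _ _ _ _ h (ho 0) (ho 1) (ho 2)
  have hw : ∀ i j, wedgeSq (φ.pderiv i x) (φ.pderiv j x) ≤ (Real.sqrt (ASq φ x))^2 := by
    intro i j; rw [Real.sq_sqrt (ASq_nonneg φ x)]; exact wedge_le_ASq φ x i j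
  have m := fun b c d => minor3_sq (φ.pderiv 0 x) (φ.pderiv 1 x) (φ.pderiv 2 x) b c d _
    (Real.sqrt_nonneg _) (hw 0 1) (hw 0 2) (hw 1 2)
  have m0 := m 1 2 3
  have m1 := m 0 2 3
  have m2 := m 0 1 3
  have m3 := m 0 1 2
  rw [← e0] at m0
  rw [← neg_sq, ← e1] at m1
  rw [← e2] at m2
  rw [← neg_sq, ← e3] at m3
  simp only [nsq, dot_expand] at h
  unfold detDen
  nlinarith

lemma detDen_abs_le (φ : SkyrmeMap) (x : R3) (h : nsq (φ.toFun x) = 1)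
    (ho : ∀ i, dot (φ.toFun x) (φ.pderiv i x) = 0) :
    |detDen φ x| ≤ 3 * energyDensity φ x := by
  have h1 := detDen_sq φ x h ho
  set s := Real.sqrt (ASq φ x) with hs
  have hs0 : 0 ≤ s := Real.sqrt_nonneg _
  have hss : s^2 = ASq φ x := Real.sq_sqrt (ASq_nonneg φ x)
  have hg := gradSq_nonneg φ x
  have hsg : s ≤ gradSq φ x := by
    rw [hs]; exact (Real.sqrt_le_sqrt (ASq_le_gradSq_sq φ x)).trans (by rw [Real.sqrt_sq hg])
  have he : energyDensity φ x = gradSq φ x + s^2 := by rw [hss]; rfl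
  rw [he]
  apply abs_le_of_sq_le_sq
  · have : s^3 ≤ s^2 * gradSq φ x := by nlinarith [sq_nonneg s]
    nlinarith [sq_nonneg (gradSq φ x - s^2)]
  · positivity

lemma young_pt (t D s lam : ℝ) (hl : 0 < lam) (hs : 0 ≤ s) (ht2 : t^2 ≤ 4)
    (hD : D^2 ≤ 24 * s^3) : |t * D| ≤ lam * s^2 + (1152 / lam^3) * t^2 := by
  apply abs_le_of_sq_le_sq
  · set C := 1152 / lam^3 with hC
    have hC0 : 0 < C := by positivity
    have hCl : lam^3 * C = 1152 := by rw [hC]; field_simp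
    have h1 : (t*D)^2 ≤ 24 * t^2 * s^3 := by
      rw [mul_pow]; nlinarith [sq_nonneg t]
    refine h1.trans ?_
    rcases le_total s (lam * C / 12) with h | h
    · have h2 : t^2 * s^2 * s ≤ t^2 * s^2 * (lam * C / 12) := by gcongr
      nlinarith [sq_nonneg (lam * s^2), sq_nonneg (C * t^2)]
    · have h2 : lam^2 * (lam * C / 12) ≤ lam^2 * s := by gcongr
      have h3 : 96 ≤ lam^2 * s := by nlinarith
      have h4 : s^3 * (24 * t^2) ≤ s^3 * (lam^2 * s) :=
        mul_le_mul_of_nonneg_left (by linarith) (by positivity)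
      have : 0 ≤ 2 * lam * s^2 * (C * t^2) + (C * t^2)^2 := by positivity
      nlinarith
  · positivity

/-! ### Part 2: mollification -/

lemma eLpNorm_two_sq {α : Type*} [MeasurableSpace α] (ν : Measure α) (g : α → ℝ) :
    (eLpNorm g 2 ν)^2 = ∫⁻ a, ‖g a‖ₑ ^ 2 ∂ν := by
  rw [eLpNorm_eq_lintegral_rpow_enorm_toReal (by norm_num) (by norm_num), ← ENNReal.rpow_natCast,
    ← ENNReal.rpow_mul]
  norm_num

lemma jensen_sq {α : Type*} [MeasurableSpace α] (ν : Measure α) [IsProbabilityMeasure ν]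
    (g : α → ℝ) (hg : AEStronglyMeasurable g ν) :
    ‖∫ a, g a ∂ν‖ₑ ^ 2 ≤ ∫⁻ a, ‖g a‖ₑ ^ 2 ∂ν := by
  have h1 : ‖∫ a, g a ∂ν‖ₑ ≤ eLpNorm g 2 ν := by
    refine (enorm_integral_le_lintegral_enorm g).trans ?_
    rw [← eLpNorm_one_eq_lintegral_enorm]
    exact eLpNorm_le_eLpNorm_of_exponent_le (by norm_num) hg
  calc ‖∫ a, g a ∂ν‖ₑ ^ 2 ≤ (eLpNorm g 2 ν)^2 := by gcongr
    _ = ∫⁻ a, ‖g a‖ₑ ^ 2 ∂ν :=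
      eLpNorm_two_sq ν g

lemma translation_tendsto (f : R3 → ℝ) (hf : MemLp f 2 volume) :
    Tendsto (fun t : R3 => eLpNorm (fun x => f (x - t) - f x) 2 volume) (𝓝 0) (𝓝 0) := by
  have mp : ∀ t : R3, MeasurePreserving (fun x : R3 => x - t) volume volume :=
    fun t => measurePreserving_sub_right volume t
  let g : C(R3, C(R3, R3)) := (ContinuousMap.mk (fun a : R3 × R3 => a.2 - a.1)
    (by fun_prop)).curry
  have mg : ∀ t : R3, MeasurePreserving (g t) volume volume := mp
  have : Fact ((1:ℝ≥0∞) ≤ 2) := ⟨by norm_num⟩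
  have hc : Continuous (fun t : R3 => Lp.compMeasurePreserving (g t) (mg t) (hf.toLp f)) :=
    continuous_const.compMeasurePreservingLp g.continuous mg (by norm_num)
  have h0 := (tendsto_iff_edist_tendsto_0.1 (hc.tendsto 0))
  refine h0.congr fun t => ?_
  rw [Lp.edist_def]
  apply eLpNorm_congr_ae
  have e1 : ∀ s : R3, ⇑(Lp.compMeasurePreserving (g s) (mg s) (hf.toLp f)) =ᵐ[volume] fun x => f (x - s) := by
    intro s
    rw [Lp.toLp_compMeasurePreserving hf (mg s)]
    exact MemLp.coeFn_toLp _
  filter_upwards [e1 t, e1 0] with x h1 h2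
  rw [Pi.sub_apply, h1, h2, sub_zero]

/-- The mollifying bumps. -/
def bmp (m : ℕ) : ContDiffBump (0 : R3) where
  rIn := 1 / (2 * (m + 1))
  rOut := 1 / (m + 1)
  rIn_pos := by positivity
  rIn_lt_rOut := by
    apply one_div_lt_one_div_of_lt <;> [positivity; skip]
    have : (0:ℝ) < (m:ℝ) + 1 := by positivity
    linarith

lemma bmp_rOut : Tendsto (fun m => (bmp m).rOut) atTop (𝓝 0) :=
  tendsto_one_div_add_atTop_nhds_zero_nat

/-- The normalised mollifier. -/
def mol (m : ℕ) : R3 → ℝ := (bmp m).normed volume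

lemma mol_nonneg (m : ℕ) (x : R3) : 0 ≤ mol m x := (bmp m).nonneg_normed x
lemma mol_contDiff (m : ℕ) : ContDiff ℝ (⊤ : ℕ∞) (mol m) := (bmp m).contDiff_normed
lemma mol_compact (m : ℕ) : HasCompactSupport (mol m) := (bmp m).hasCompactSupport_normed
lemma mol_integral (m : ℕ) : ∫ x, mol m x = 1 := (bmp m).integral_normed
lemma mol_integrable (m : ℕ) : Integrable (mol m) := (bmp m).integrable_normed
lemma mol_cont (m : ℕ) : Continuous (mol m) := (bmp m).continuous_normed
lemma mol_ne_zero (m : ℕ) (x : R3) (h : mol m x ≠ 0) : ‖x‖ < (bmp m).rOut := by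
  have : x ∈ Function.support (mol m) := h
  unfold mol at this
  rw [(bmp m).support_normed_eq] at this
  simpa using this

/-- The mollifier as a probability measure. -/
def molM (m : ℕ) : Measure R3 := volume.withDensity (fun x => ((mol m x).toNNReal : ℝ≥0∞))

instance (m : ℕ) : IsProbabilityMeasure (molM m) := by
  constructor
  unfold molM
  rw [withDensity_apply _ MeasurableSet.univ, Measure.restrict_univ]
  have : ∫⁻ x, ENNReal.ofReal (mol m x) = ENNReal.ofReal (∫ x, mol m x) :=
    (ofReal_integral_eq_lintegral_ofReal (mol_integrable m) (ae_of_all _ (mol_nonneg m))).symm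
  rw [mol_integral] at this
  simpa [ENNReal.ofReal] using this

lemma mol_meas (m : ℕ) : Measurable (fun x => (mol m x).toNNReal) :=
  (mol_cont m).measurable.real_toNNReal

lemma molM_integral (m : ℕ) (g : R3 → ℝ) : ∫ t, g t ∂(molM m) = ∫ t, mol m t * g t := by
  unfold molM
  rw [integral_withDensity_eq_integral_smul (mol_meas m)]
  refine integral_congr_ae (ae_of_all _ fun x => ?_)
  simp [NNReal.smul_def, Real.coe_toNNReal _ (mol_nonneg m x)]

lemma molM_integrable (m : ℕ) (g : R3 → ℝ) (h : LocallyIntegrable g) : Integrable g (molM m) := by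
  unfold molM
  rw [integrable_withDensity_iff_integrable_smul (mol_meas m)]
  have := h.integrable_smul_left_of_hasCompactSupport (mol_cont m) (mol_compact m)
  refine this.congr (ae_of_all _ fun x => ?_)
  simp [NNReal.smul_def, Real.coe_toNNReal _ (mol_nonneg m x)]

lemma molM_ball (m : ℕ) : ∀ᵐ t ∂(molM m), ‖t‖ < (bmp m).rOut := by
  unfold molM
  rw [ae_withDensity_iff (by exact (mol_meas m).coe_nnreal_ennreal)]
  refine ae_of_all _ fun x hx => mol_ne_zero m x ?_
  intro h
  simp [h] at hx

lemma molM_ac (m : ℕ) : molM m ≪ volume := withDensity_absolutelyContinuous _ _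

lemma locInt_shift (f : R3 → ℝ) (hf : LocallyIntegrable f) (x : R3) :
    LocallyIntegrable (fun t => f (x - t)) := by
  have := (Homeomorph.subLeft x : R3 ≃ₜ R3)
  rw [locallyIntegrable_iff]
  intro k hk
  have h1 : IsCompact ((fun t => x - t) '' k) := hk.image (by fun_prop)
  have h2 := (hf.integrableOn_isCompact h1)
  have h3 := ((Measure.measurePreserving_sub_left (volume : Measure R3) x).integrableOn_comp_preimage
    (Homeomorph.subLeft x : R3 ≃ₜ R3).measurableEmbedding (f := f) (s := (fun t => x - t) '' k)).2 h2
  refine h3.mono_set ?_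
  exact Set.subset_preimage_image _ _

lemma mol_L2 (f : R3 → ℝ) (hm : Measurable f) (hf : MemLp f 2 volume) :
    Tendsto (fun m => eLpNorm (fun x => (∫ t, mol m t * f (x - t)) - f x) 2 volume) atTop (𝓝 0) := by
  have hli : LocallyIntegrable f := hf.locallyIntegrable (by norm_num)
  have key : ∀ m (ε : ℝ≥0∞), (∀ t : R3, ‖t‖ < (bmp m).rOut →
      eLpNorm (fun x => f (x - t) - f x) 2 volume ≤ ε) →
      eLpNorm (fun x => (∫ t, mol m t * f (x - t)) - f x) 2 volume ≤ ε := by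
    intro m ε hε
    have hsq : (eLpNorm (fun x => (∫ t, mol m t * f (x - t)) - f x) 2 volume)^2 ≤ ε^2 := by
      rw [eLpNorm_two_sq]
      calc ∫⁻ x, ‖(∫ t, mol m t * f (x - t)) - f x‖ₑ^2
          ≤ ∫⁻ x, ∫⁻ t, ‖f (x - t) - f x‖ₑ^2 ∂(molM m) := by
            refine lintegral_mono fun x => ?_
            have : (∫ t, mol m t * f (x - t)) - f x = ∫ t, (f (x - t) - f x) ∂(molM m) := by
              rw [integral_sub (molM_integrable m _ (locInt_shift f hli x)) (integrable_const _),
                molM_integral]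
              simp
            rw [this]
            refine jensen_sq _ _ (Measurable.aestronglyMeasurable (by fun_prop))
        _ = ∫⁻ t, (∫⁻ x, ‖f (x - t) - f x‖ₑ^2) ∂(molM m) := by
            rw [lintegral_lintegral_swap]
            exact Measurable.aemeasurable (by fun_prop)
        _ ≤ ∫⁻ t, ε^2 ∂(molM m) := by
            refine lintegral_mono_ae ?_
            filter_upwards [molM_ball m] with t ht
            rw [← eLpNorm_two_sq]
            gcongr
            exact hε t ht
        _ = ε^2 := by simp
    exact (ENNReal.pow_le_pow_left_iff (by norm_num)).1 hsq
  rw [ENNReal.tendsto_nhds_zero]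
  intro ε hε
  have h1 := (ENNReal.tendsto_nhds_zero.1 (translation_tendsto f hf)) ε hε
  obtain ⟨δ, hδ, hb⟩ := Metric.eventually_nhds_iff.1 h1
  filter_upwards [bmp_rOut.eventually (gt_mem_nhds hδ)] with m hmb
  refine key m ε fun t ht => hb ?_
  simpa using ht.trans hmb

/-! ### Part 3: weakly differentiable functions and smooth approximation -/

/-- Classical partial derivative. -/
def pd (i : Fin 3) (f : R3 → ℝ) (x : R3) : ℝ := fderiv ℝ f x (Pi.single i 1)

/-- Bounded function with weak gradient in `L²`. -/
structure WD (u : R3 → ℝ) (p : Fin 3 → R3 → ℝ) : Prop where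
  meas : Measurable u
  bd : ∀ᵐ x, |u x| ≤ 1
  memLp : ∀ i, MemLp (p i) 2 volume
  weak : ∀ i ψ, IsTestFun ψ → ∫ x, pd i ψ x * u x = - ∫ x, ψ x * p i x

lemma WD.locInt {u p} (h : WD u p) : LocallyIntegrable u := by
  have : MemLp u ⊤ volume := memLp_top_of_bound h.meas.aestronglyMeasurable 1 (by
    filter_upwards [h.bd] with x hx; simpa using hx)
  exact this.locallyIntegrable le_top

/-- The mollified function. -/
def molf (m : ℕ) (u : R3 → ℝ) : R3 → ℝ := convolution u (mol m) (ContinuousLinearMap.lsmul ℝ ℝ) volume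

lemma molf_eq (m : ℕ) (u : R3 → ℝ) (x : R3) : molf m u x = ∫ t, mol m t * u (x - t) := by
  unfold molf
  rw [convolution_eq_swap]
  simp [mul_comm]

lemma molf_contDiff (m : ℕ) (u : R3 → ℝ) (hu : LocallyIntegrable u) :
    ContDiff ℝ (⊤ : ℕ∞) (molf m u) :=
  (mol_compact m).contDiff_convolution_right _ hu (mol_contDiff m)

lemma pd_molf (m : ℕ) {u p} (h : WD u p) (i : Fin 3) (x : R3) :
    pd i (molf m u) x = ∫ t, mol m t * p i (x - t) := by
  have hd := (mol_compact m).hasFDerivAt_convolution_right (ContinuousLinearMap.lsmul ℝ ℝ)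
    h.locInt ((mol_contDiff m).of_le (by exact_mod_cast le_top)) x
  unfold pd molf
  rw [hd.fderiv, convolution_precompR_apply _ h.locInt ((mol_compact m).fderiv ℝ)
    ((mol_contDiff m).continuous_fderiv (by simp))]
  rw [convolution_def]
  have ht : IsTestFun (fun t => mol m (x - t)) := by
    refine ⟨(mol_contDiff m).comp (by fun_prop), ?_⟩
    exact (mol_compact m).comp_homeomorph (Homeomorph.subLeft x)
  have hw := h.weak i _ ht
  have hpd : ∀ t, pd i (fun t => mol m (x - t)) t = - fderiv ℝ (mol m) (x - t) (Pi.single i 1) := by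
    intro t
    unfold pd
    have h1 : HasFDerivAt (fun t => mol m (x - t))
        ((fderiv ℝ (mol m) (x - t)).comp (-(ContinuousLinearMap.id ℝ R3))) t := by
      refine HasFDerivAt.comp t (((mol_contDiff m).differentiable (by simp)) _).hasFDerivAt ?_
      exact (hasFDerivAt_id t).const_sub x
    rw [h1.fderiv]
    simp
  simp only [hpd, neg_mul, integral_neg, neg_inj] at hw
  rw [integral_sub_left_eq_self (fun t => mol m t * p i (x - t)) volume x |>.symm]
  simp only [sub_sub_cancel]
  rw [← hw]
  simp [mul_comm]

lemma approx {u p} (h : WD u p) : ∃ g : ℕ → R3 → ℝ,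
    (∀ m, ContDiff ℝ (⊤ : ℕ∞) (g m)) ∧ (∀ m x, |g m x| ≤ 1) ∧
    (∀ᵐ x, Tendsto (fun m => g m x) atTop (𝓝 (u x))) ∧
    ∀ i, Tendsto (fun m => eLpNorm (fun x => pd i (g m) x - p i x) 2 volume) atTop (𝓝 0) := by
  refine ⟨fun m => molf m u, fun m => molf_contDiff m u h.locInt, ?_, ?_, ?_⟩
  · intro m x
    show |molf m u x| ≤ 1
    rw [molf_eq, ← molM_integral]
    have : ‖∫ t, u (x - t) ∂(molM m)‖ ≤ 1 * (molM m).real Set.univ := by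
      apply norm_integral_le_of_norm_le_const
      have h1 : ∀ᵐ t, |u (x - t)| ≤ 1 :=
        (Measure.measurePreserving_sub_left (volume : Measure R3) x).quasiMeasurePreserving.ae h.bd
      exact (molM_ac m).ae_le h1
    simpa using this
  · have := ContDiffBump.ae_convolution_tendsto_right_of_locallyIntegrable (μ := (volume : Measure R3))
      (φ := bmp) (l := atTop) (K := 2) bmp_rOut (Eventually.of_forall fun m => by
        simp only [bmp]; apply le_of_eq; field_simp) h.locInt
    filter_upwards [this] with x hx
    refine hx.congr fun m => ?_
    rw [molf_eq, convolution_def]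
    rfl
  · intro i
    have hm := (h.memLp i).1
    set q := hm.mk (p i) with hq
    have hpq : p i =ᵐ[volume] q := hm.ae_eq_mk
    have := mol_L2 q hm.stronglyMeasurable_mk.measurable ((memLp_congr_ae hpq).1 (h.memLp i))
    refine this.congr fun m => ?_
    apply eLpNorm_congr_ae
    filter_upwards [hpq] with x hx
    rw [pd_molf m h, hx]
    congr 1
    refine integral_congr_ae ?_
    filter_upwards [(Measure.measurePreserving_sub_left (volume : Measure R3) x).quasiMeasurePreserving.ae hpq] with t ht
    rw [ht]

/-! ### Part 4: test function calculus and limits -/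

lemma smooth_pd (i : Fin 3) {f : R3 → ℝ} (hf : ContDiff ℝ (⊤ : ℕ∞) f) :
    ContDiff ℝ (⊤ : ℕ∞) (pd i f) := by
  have h1 : ContDiff ℝ (⊤ : ℕ∞) (fderiv ℝ f) := hf.fderiv_right (by simp)
  exact h1.clm_apply contDiff_const

lemma pd_mul (i : Fin 3) {f g : R3 → ℝ} (hf : ContDiff ℝ (⊤ : ℕ∞) f)
    (hg : ContDiff ℝ (⊤ : ℕ∞) g) (x : R3) :
    pd i (fun y => f y * g y) x = pd i f x * g x + f x * pd i g x := by
  unfold pd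
  rw [fderiv_fun_mul (hf.differentiable (by simp) x) (hg.differentiable (by simp) x)]
  simp; ring

lemma pd_sub (i : Fin 3) {f g : R3 → ℝ} (hf : ContDiff ℝ (⊤ : ℕ∞) f)
    (hg : ContDiff ℝ (⊤ : ℕ∞) g) (x : R3) :
    pd i (fun y => f y - g y) x = pd i f x - pd i g x := by
  unfold pd
  rw [fderiv_fun_sub (hf.differentiable (by simp) x) (hg.differentiable (by simp) x)]
  simp

lemma pd_comm (i j : Fin 3) {f : R3 → ℝ} (hf : ContDiff ℝ (⊤ : ℕ∞) f) (x : R3) :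
    pd i (pd j f) x = pd j (pd i f) x := by
  have h1 : ContDiff ℝ (⊤ : ℕ∞) (fderiv ℝ f) := hf.fderiv_right (by simp)
  have hs : IsSymmSndFDerivAt ℝ f x :=
    (hf.contDiffAt (x := x)).isSymmSndFDerivAt (by
      rw [minSmoothness_of_isRCLikeNormedField]; exact WithTop.coe_le_coe.2 le_top)
  have e : ∀ a b : Fin 3, pd a (pd b f) x = fderiv ℝ (fderiv ℝ f) x (Pi.single a 1) (Pi.single b 1) := by
    intro a b
    have : pd b f = fun y => fderiv ℝ f y (Pi.single b 1) := rfl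
    rw [this]
    unfold pd
    rw [fderiv_clm_apply (h1.differentiable (by simp) x) (differentiableAt_const _)]
    simp
  rw [e, e]
  exact hs _ _

lemma IsTestFun.mul {ψ g : R3 → ℝ} (h : IsTestFun ψ) (hg : ContDiff ℝ (⊤ : ℕ∞) g) :
    IsTestFun (fun x => ψ x * g x) := ⟨h.1.mul hg, h.2.mul_right⟩

lemma IsTestFun.pd {ψ : R3 → ℝ} (h : IsTestFun ψ) (i : Fin 3) : IsTestFun (pd i ψ) :=
  ⟨smooth_pd i h.1, h.2.fderiv_apply ℝ _⟩

lemma IsTestFun.sub {ψ χ : R3 → ℝ} (h : IsTestFun ψ) (h' : IsTestFun χ) :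
    IsTestFun (fun x => ψ x - χ x) := ⟨h.1.sub h'.1, h.2.sub h'.2⟩

lemma IsTestFun.memLp {ψ : R3 → ℝ} (h : IsTestFun ψ) (p : ℝ≥0∞) : MemLp ψ p volume :=
  h.1.continuous.memLp_of_hasCompactSupport h.2

lemma IsTestFun.integrable_mul {ψ f : R3 → ℝ} (h : IsTestFun ψ) (hf : LocallyIntegrable f) :
    Integrable (fun x => ψ x * f x) :=
  hf.integrable_smul_left_of_hasCompactSupport h.1.continuous h.2

lemma WD.memLpTop {u p} (h : WD u p) : MemLp u ⊤ volume :=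
  memLp_top_of_bound h.meas.aestronglyMeasurable 1 (by
    filter_upwards [h.bd] with x hx; simpa using hx)

lemma IsTestFun.memLp_mul {ψ f : R3 → ℝ} (h : IsTestFun ψ) (hf : MemLp f 2 volume) :
    MemLp (fun x => ψ x * f x) 2 volume := hf.mul (h.memLp ⊤)

lemma IsTestFun.memLp_mul_top {ψ f : R3 → ℝ} (h : IsTestFun ψ) (hf : MemLp f ⊤ volume) :
    MemLp (fun x => ψ x * f x) 2 volume := hf.mul (h.memLp 2)

lemma int_mul {f g : R3 → ℝ} (hf : MemLp f 2 volume) (hg : MemLp g 2 volume) :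
    Integrable (fun x => f x * g x) := hf.integrable_mul hg

lemma integral_pd {ψ : R3 → ℝ} (h : IsTestFun ψ) (i : Fin 3) : ∫ x, pd i ψ x = 0 := by
  have := integral_mul_fderiv_eq_neg_fderiv_mul_of_integrable (μ := (volume : Measure R3))
    (f := fun _ => (1:ℝ)) (g := ψ) (v := Pi.single i 1) (by simp)
    (by simpa [pd] using! memLp_one_iff_integrable.1 ((h.pd i).memLp 1))
    (by simpa using memLp_one_iff_integrable.1 (h.memLp 1)) (fun _ _ => differentiableAt_const _)
    (fun x _ => h.1.differentiable (by simp) x)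
  simpa [pd] using this

lemma pair_tendsto {G : R3 → ℝ} (hG : MemLp G 2 volume) {f : ℕ → R3 → ℝ} {f0 : R3 → ℝ}
    (hf : ∀ m, Continuous (f m)) (h0 : MemLp f0 2 volume)
    (ht : Tendsto (fun m => eLpNorm (fun x => f m x - f0 x) 2 volume) atTop (𝓝 0)) :
    Tendsto (fun m => ∫ x, G x * f m x) atTop (𝓝 (∫ x, G x * f0 x)) := by
  have hm : ∀ m, AEStronglyMeasurable (fun x => f m x - f0 x) volume :=
    fun m => (hf m).aestronglyMeasurable.sub h0.1
  refine tendsto_integral_of_L1' _ (int_mul hG h0).1 ?_ ?_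
  · filter_upwards [ht.eventually (gt_mem_nhds ENNReal.zero_lt_top)] with m hlt
    have h1 : MemLp (fun x => f m x - f0 x) 2 volume := ⟨hm m, hlt⟩
    have h2 : MemLp (f m) 2 volume := by
      have := h1.add h0
      convert this using 1
      ext x; simp
    exact int_mul hG h2
  · have hb : Tendsto (fun m => eLpNorm G 2 volume * eLpNorm (fun x => f m x - f0 x) 2 volume)
        atTop (𝓝 0) := by
      have := ENNReal.Tendsto.const_mul (a := eLpNorm G 2 volume) ht (Or.inr hG.2.ne)
      simpa using this
    refine tendsto_of_tendsto_of_tendsto_of_le_of_le tendsto_const_nhds hb (fun _ => zero_le) ?_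
    intro m
    have := eLpNorm_smul_le_mul_eLpNorm (p := 2) (q := 2) (r := 1) (hm m) hG.1
    refine le_trans (le_of_eq ?_) this
    refine eLpNorm_congr_ae (ae_of_all _ fun x => ?_)
    show G x * f m x - G x * f0 x = G x * (f m x - f0 x)
    ring

lemma bdd_tendsto {H u : R3 → ℝ} (hH : Integrable H) {g : ℕ → R3 → ℝ} (hg : ∀ m, Continuous (g m))
    (hb : ∀ m x, |g m x| ≤ 1) (ht : ∀ᵐ x, Tendsto (fun m => g m x) atTop (𝓝 (u x))) :
    Tendsto (fun m => ∫ x, g m x * H x) atTop (𝓝 (∫ x, u x * H x)) := by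
  refine tendsto_integral_of_dominated_convergence (fun x => |H x|) ?_ hH.abs ?_ ?_
  · exact fun m => (hg m).aestronglyMeasurable.mul hH.1
  · intro m
    refine ae_of_all _ fun x => ?_
    rw [Real.norm_eq_abs, abs_mul]
    exact mul_le_of_le_one_left (abs_nonneg _) (hb m x)
  · filter_upwards [ht] with x hx
    exact hx.mul_const _

lemma WD.mul_integrable {u p} (h : WD u p) {H : R3 → ℝ} (hH : Integrable H) :
    Integrable (fun x => u x * H x) := by
  refine hH.bdd_mul (c := 1) h.meas.aestronglyMeasurable ?_
  filter_upwards [h.bd] with x hx; simpa using hx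

lemma sq_weak {u p} (h : WD u p) (i : Fin 3) {ψ : R3 → ℝ} (hψ : IsTestFun ψ) :
    ∫ x, pd i ψ x * (u x * u x) = - 2 * ∫ x, ψ x * (u x * p i x) := by
  obtain ⟨g, gs, gb, gt, gd⟩ := approx h
  have hpL : LocallyIntegrable (p i) := (h.memLp i).locallyIntegrable (by norm_num)
  have h1 : ∀ m, (∫ x, g m x * (pd i ψ x * u x)) + ∫ x, (ψ x * u x) * pd i (g m) x
      = - ∫ x, g m x * (ψ x * p i x) := by
    intro m
    have hw := h.weak i _ (hψ.mul (gs m))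
    rw [← integral_add]
    · rw [show (∫ x, g m x * (ψ x * p i x)) = ∫ x, ψ x * g m x * p i x from
        integral_congr_ae (ae_of_all _ fun x => by ring)]
      rw [← hw]
      refine integral_congr_ae (ae_of_all _ fun x => ?_)
      simp only [pd_mul i hψ.1 (gs m)]
      ring
    · have := ((hψ.pd i).mul (gs m)).integrable_mul h.locInt
      refine this.congr (ae_of_all _ fun x => ?_)
      simp only; ring
    · have := (hψ.mul (smooth_pd i (gs m))).integrable_mul h.locInt
      refine this.congr (ae_of_all _ fun x => ?_)
      simp only; ring
  have l1 := bdd_tendsto ((hψ.pd i).integrable_mul h.locInt) (fun m => (gs m).continuous) gb gt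
  have l2 := pair_tendsto (hψ.memLp_mul_top h.memLpTop) (fun m => (smooth_pd i (gs m)).continuous)
    (h.memLp i) (gd i)
  have l3 := bdd_tendsto (hψ.integrable_mul hpL) (fun m => (gs m).continuous) gb gt
  have e := tendsto_nhds_unique ((l1.add l2).congr h1) l3.neg
  have e1 : ∫ x, u x * (pd i ψ x * u x) = ∫ x, pd i ψ x * (u x * u x) :=
    integral_congr_ae (ae_of_all _ fun x => by ring)
  have e2 : ∫ x, ψ x * u x * p i x = ∫ x, ψ x * (u x * p i x) :=
    integral_congr_ae (ae_of_all _ fun x => by ring)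
  have e3 : ∫ x, u x * (ψ x * p i x) = ∫ x, ψ x * (u x * p i x) :=
    integral_congr_ae (ae_of_all _ fun x => by ring)
  rw [e1, e2, e3] at e
  linarith

/-! ### Part 5: null Lagrangian identities -/

/-- cross product components -/
def crs (p q : Fin 3 → R3 → ℝ) (i : Fin 3) (x : R3) : ℝ :=
  p (i + 1) x * q (i + 2) x - p (i + 2) x * q (i + 1) x

lemma comb3 {a b c : R3 → ℝ} (ha : Integrable a) (hb : Integrable b) (hc : Integrable c) :
    (∫ x, a x) + (∫ x, b x) + (∫ x, c x) = ∫ x, (a x + b x + c x) := by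
  rw [integral_add (ha.fun_add hb) hc, integral_add ha hb]

lemma comb6 {a b c d e f : R3 → ℝ} (ha : Integrable a) (hb : Integrable b) (hc : Integrable c)
    (hd : Integrable d) (he : Integrable e) (hf : Integrable f) :
    ((∫ x, a x) - (∫ x, b x)) + ((∫ x, c x) - (∫ x, d x)) + ((∫ x, e x) - (∫ x, f x))
      = ∫ x, (a x - b x + (c x - d x) + (e x - f x)) := by
  rw [← comb3 (ha.sub' hb) (hc.sub' hd) (he.sub' hf), integral_sub ha hb,
    integral_sub hc hd, integral_sub he hf]

lemma div_free {v p w q} (hv : WD v p) (hw : WD w q) {ψ : R3 → ℝ} (hψ : IsTestFun ψ) :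
    ∫ x, ∑ i, pd i ψ x * crs p q i x = 0 := by
  obtain ⟨g, gs, gb, gt, gd⟩ := approx hv
  -- limits of elementary terms
  have lim : ∀ i j k : Fin 3, Tendsto (fun m => ∫ x, (pd i ψ x * q k x) * pd j (g m) x) atTop
      (𝓝 (∫ x, (pd i ψ x * q k x) * p j x)) := fun i j k =>
    pair_tendsto ((hψ.pd i).memLp_mul (hw.memLp k)) (fun m => (smooth_pd j (gs m)).continuous)
      (hv.memLp j) (gd j)
  have int1 : ∀ i j k : Fin 3, Integrable (fun x => (pd i ψ x * q k x) * p j x) := fun i j k =>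
    int_mul ((hψ.pd i).memLp_mul (hw.memLp k)) (hv.memLp j)
  have hqL : ∀ k, LocallyIntegrable (q k) := fun k => (hw.memLp k).locallyIntegrable (by norm_num)
  have int2 : ∀ m, ∀ i j k : Fin 3, Integrable (fun x => (pd i ψ x * q k x) * pd j (g m) x) := by
    intro m i j k
    have := ((hψ.pd i).mul (smooth_pd j (gs m))).integrable_mul (hqL k)
    refine this.congr (ae_of_all _ fun x => ?_)
    simp only; ring
  -- the smooth identity
  have tst : ∀ m, ∀ i j : Fin 3, IsTestFun (fun x => pd i ψ x * pd j (g m) x - pd j ψ x * pd i (g m) x) :=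
    fun m i j => ((hψ.pd i).mul (smooth_pd j (gs m))).sub ((hψ.pd j).mul (smooth_pd i (gs m)))
  have wk : ∀ m, ∀ i j k : Fin 3, (∫ x, (pd i ψ x * q k x) * pd j (g m) x)
      - (∫ x, (pd j ψ x * q k x) * pd i (g m) x)
      = - ∫ x, (pd k (pd i ψ) x * pd j (g m) x + pd i ψ x * pd k (pd j (g m)) x
        - (pd k (pd j ψ) x * pd i (g m) x + pd j ψ x * pd k (pd i (g m)) x)) * w x := by
    intro m i j k
    have := hw.weak k _ (tst m i j)
    rw [← integral_sub (int2 m i j k) (int2 m j i k)]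
    have e : ∀ x, pd k (fun x => pd i ψ x * pd j (g m) x - pd j ψ x * pd i (g m) x) x
        = (pd k (pd i ψ) x * pd j (g m) x + pd i ψ x * pd k (pd j (g m)) x
        - (pd k (pd j ψ) x * pd i (g m) x + pd j ψ x * pd k (pd i (g m)) x)) := by
      intro x
      rw [pd_sub k ((hψ.pd i).mul (smooth_pd j (gs m))).1 ((hψ.pd j).mul (smooth_pd i (gs m))).1,
        pd_mul k (hψ.pd i).1 (smooth_pd j (gs m)), pd_mul k (hψ.pd j).1 (smooth_pd i (gs m))]
    simp only [e] at this
    rw [this, neg_neg]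
    refine integral_congr_ae (ae_of_all _ fun x => ?_)
    simp only; ring
  have int3 : ∀ m, ∀ i j k : Fin 3, Integrable (fun x => (pd k (pd i ψ) x * pd j (g m) x + pd i ψ x * pd k (pd j (g m)) x
        - (pd k (pd j ψ) x * pd i (g m) x + pd j ψ x * pd k (pd i (g m)) x)) * w x) := by
    intro m i j k
    have e : (pd k (fun x => pd i ψ x * pd j (g m) x - pd j ψ x * pd i (g m) x))
        = fun x => (pd k (pd i ψ) x * pd j (g m) x + pd i ψ x * pd k (pd j (g m)) x
        - (pd k (pd j ψ) x * pd i (g m) x + pd j ψ x * pd k (pd i (g m)) x)) := by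
      ext x
      rw [pd_sub k ((hψ.pd i).mul (smooth_pd j (gs m))).1 ((hψ.pd j).mul (smooth_pd i (gs m))).1,
        pd_mul k (hψ.pd i).1 (smooth_pd j (gs m)), pd_mul k (hψ.pd j).1 (smooth_pd i (gs m))]
    have := ((tst m i j).pd k).integrable_mul hw.locInt
    rw [e] at this
    exact this
  have zero : ∀ m, (((∫ x, (pd 0 ψ x * q 2 x) * pd 1 (g m) x) - (∫ x, (pd 1 ψ x * q 2 x) * pd 0 (g m) x))
      + ((∫ x, (pd 1 ψ x * q 0 x) * pd 2 (g m) x) - (∫ x, (pd 2 ψ x * q 0 x) * pd 1 (g m) x)))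
      + ((∫ x, (pd 2 ψ x * q 1 x) * pd 0 (g m) x) - (∫ x, (pd 0 ψ x * q 1 x) * pd 2 (g m) x)) = 0 := by
    intro m
    rw [wk m 0 1 2, wk m 1 2 0, wk m 2 0 1, ← neg_add, ← neg_add,
      comb3 (int3 m 0 1 2) (int3 m 1 2 0) (int3 m 2 0 1), neg_eq_zero]
    refine integral_eq_zero_of_ae (ae_of_all _ fun x => ?_)
    simp only [Pi.zero_apply]
    rw [pd_comm 2 0 hψ.1, pd_comm 2 1 hψ.1, pd_comm 1 0 hψ.1, pd_comm 2 0 (gs m),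
      pd_comm 2 1 (gs m), pd_comm 1 0 (gs m)]
    ring
  have L := (((lim 0 1 2).sub (lim 1 0 2)).add ((lim 1 2 0).sub (lim 2 1 0))).add ((lim 2 0 1).sub (lim 0 2 1))
  have E := tendsto_nhds_unique L (tendsto_const_nhds.congr fun m => (zero m).symm)
  rw [comb6 (int1 _ _ _) (int1 _ _ _) (int1 _ _ _) (int1 _ _ _) (int1 _ _ _) (int1 _ _ _)] at E
  rw [← E]
  refine integral_congr_ae (ae_of_all _ fun x => ?_)
  simp only [Fin.sum_univ_three, crs]
  have a1 : (1 : Fin 3) + 1 = 2 := rfl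
  have a2 : (1 : Fin 3) + 2 = 0 := rfl
  have a3 : (2 : Fin 3) + 1 = 0 := rfl
  have a4 : (2 : Fin 3) + 2 = 1 := rfl
  simp only [a1, a2, a3, a4, zero_add]
  ring

lemma weak_jac {u r} (hu : WD u r) {F : Fin 3 → R3 → ℝ} (hF : ∀ i, MemLp (F i) 2 volume)
    (hdiv : ∀ ψ : R3 → ℝ, IsTestFun ψ → ∫ x, ∑ i, pd i ψ x * F i x = 0)
    {ψ : R3 → ℝ} (hψ : IsTestFun ψ) :
    ∫ x, ψ x * ∑ i, r i x * F i x = - ∫ x, u x * ∑ i, pd i ψ x * F i x := by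
  obtain ⟨g, gs, gb, gt, gd⟩ := approx hu
  have hL : ∀ k, LocallyIntegrable (F k) := fun k => (hF k).locallyIntegrable (by norm_num)
  have i1 : Integrable (fun x => ∑ i, pd i ψ x * F i x) :=
    integrable_finsetSum _ fun i _ => (hψ.pd i).integrable_mul (hL i)
  have i2 : ∀ m i, Integrable (fun x => (ψ x * F i x) * pd i (g m) x) := by
    intro m i
    refine ((hψ.mul (smooth_pd i (gs m))).integrable_mul (hL i)).congr (ae_of_all _ fun x => ?_)
    simp only; ring
  have i3 : ∀ i, Integrable (fun x => (ψ x * F i x) * r i x) := fun i =>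
    int_mul (hψ.memLp_mul (hF i)) (hu.memLp i)
  have i4 : ∀ m, Integrable (fun x => g m x * ∑ i, pd i ψ x * F i x) := by
    intro m
    have : Integrable (fun x => ∑ i, (pd i ψ x * g m x) * F i x) :=
      integrable_finsetSum _ fun i _ => ((hψ.pd i).mul (gs m)).integrable_mul (hL i)
    refine this.congr (ae_of_all _ fun x => ?_)
    simp only [Finset.mul_sum]
    exact Finset.sum_congr rfl fun i _ => by ring
  have z : ∀ m, (∫ x, g m x * ∑ i, pd i ψ x * F i x) + ∑ i, ∫ x, (ψ x * F i x) * pd i (g m) x = 0 := by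
    intro m
    have := hdiv _ (hψ.mul (gs m))
    rw [← integral_finsetSum _ (fun i _ => i2 m i), ← integral_add (i4 m) (integrable_finsetSum _ fun i _ => i2 m i), ← this]
    refine integral_congr_ae (ae_of_all _ fun x => ?_)
    simp only [Finset.mul_sum, ← Finset.sum_add_distrib, pd_mul _ hψ.1 (gs m)]
    exact Finset.sum_congr rfl fun i _ => by ring
  have l1 := bdd_tendsto i1 (fun m => (gs m).continuous) gb gt
  have l2 : Tendsto (fun m => ∑ i, ∫ x, (ψ x * F i x) * pd i (g m) x) atTop
      (𝓝 (∑ i, ∫ x, (ψ x * F i x) * r i x)) := tendsto_finsetSum _ fun i _ =>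
    pair_tendsto (hψ.memLp_mul (hF i)) (fun m => (smooth_pd i (gs m)).continuous) (hu.memLp i) (gd i)
  have E := tendsto_nhds_unique (l1.add l2) (tendsto_const_nhds.congr fun m => (z m).symm)
  rw [← integral_finsetSum _ (fun i _ => i3 i)] at E
  have e : ∫ x, ∑ i, (ψ x * F i x) * r i x = ∫ x, ψ x * ∑ i, r i x * F i x := by
    refine integral_congr_ae (ae_of_all _ fun x => ?_)
    simp only [Finset.mul_sum]
    exact Finset.sum_congr rfl fun i _ => by ring
  rw [e] at E
  linarith

/-- base cut-off -/
def chi0 : ContDiffBump (0 : R3) where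
  rIn := 1
  rOut := 2
  rIn_pos := by norm_num
  rIn_lt_rOut := by norm_num

/-- cut-off at scale n+1 -/
def chi (n : ℕ) (x : R3) : ℝ := chi0 ((1 / ((n : ℝ) + 1)) • x)

lemma chi_test (n : ℕ) : IsTestFun (chi n) := by
  have hn : (1 / ((n : ℝ) + 1)) ≠ 0 := by positivity
  refine ⟨chi0.contDiff.comp (contDiff_const_smul _), ?_⟩
  exact chi0.hasCompactSupport.comp_homeomorph (Homeomorph.smulOfNeZero _ hn)

lemma chi_tendsto (x : R3) : Tendsto (fun n => chi n x) atTop (𝓝 1) := by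
  have h1 : Tendsto (fun n : ℕ => (1 / ((n : ℝ) + 1)) • x) atTop (𝓝 ((0:ℝ) • x)) :=
    tendsto_one_div_add_atTop_nhds_zero_nat.smul_const x
  rw [zero_smul] at h1
  have h2 := (chi0.continuous.tendsto 0).comp h1
  have h3 : chi0 (0 : R3) = 1 := chi0.one_of_mem_closedBall (by simp [chi0])
  rw [h3] at h2
  exact h2

lemma pd_chi (n : ℕ) (i : Fin 3) (x : R3) :
    pd i (chi n) x = (1 / ((n : ℝ) + 1)) * pd i chi0 ((1 / ((n : ℝ) + 1)) • x) := by
  unfold pd chi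
  rw [fderiv_comp_smul]
  simp

lemma pd_chi_bound : ∃ C : ℝ, 0 ≤ C ∧ ∀ n i x, |pd i (chi n) x| ≤ C * (1 / ((n : ℝ) + 1)) := by
  have hd : IsTestFun (chi0 : R3 → ℝ) := ⟨chi0.contDiff, chi0.hasCompactSupport⟩
  have : ∀ i, ∃ C, ∀ x, ‖pd i chi0 x‖ ≤ C := fun i =>
    (hd.pd i).2.exists_bound_of_continuous (hd.pd i).1.continuous
  choose C hC using this
  have hC0 : ∀ i, 0 ≤ C i := fun i => (norm_nonneg _).trans (hC i 0)
  refine ⟨∑ i, C i, Finset.sum_nonneg fun i _ => hC0 i, fun n i x => ?_⟩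
  rw [pd_chi, abs_mul, mul_comm, abs_of_nonneg (by positivity : (0:ℝ) ≤ 1 / ((n : ℝ) + 1))]
  gcongr
  exact (hC i _).trans (Finset.single_le_sum (f := C) (fun i _ => hC0 i) (Finset.mem_univ i))

lemma jac_zero {u r} (hu : WD u r) {F : Fin 3 → R3 → ℝ} (hF : ∀ i, MemLp (F i) 2 volume)
    (hF1 : ∀ i, Integrable (F i))
    (hdiv : ∀ ψ : R3 → ℝ, IsTestFun ψ → ∫ x, ∑ i, pd i ψ x * F i x = 0) :
    ∫ x, ∑ i, r i x * F i x = 0 := by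
  have hI : Integrable (fun x => ∑ i, r i x * F i x) :=
    integrable_finsetSum _ fun i _ => int_mul (hu.memLp i) (hF i)
  have l1 : Tendsto (fun n => ∫ x, chi n x * ∑ i, r i x * F i x) atTop
      (𝓝 (∫ x, 1 * ∑ i, r i x * F i x)) := by
    refine bdd_tendsto (u := fun _ => 1) hI (fun n => (chi_test n).1.continuous) ?_ (ae_of_all _ chi_tendsto)
    intro n x
    unfold chi
    rw [abs_of_nonneg chi0.nonneg]
    exact chi0.le_one
  obtain ⟨C, hC0, hC⟩ := pd_chi_bound
  have l2 : Tendsto (fun n => ∫ x, u x * ∑ i, pd i (chi n) x * F i x) atTop (𝓝 (∫ _ : R3, (0:ℝ))) := by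
    refine tendsto_integral_of_dominated_convergence (fun x => ∑ i, C * |F i x|) ?_ ?_ ?_ ?_
    · intro n
      refine hu.meas.aestronglyMeasurable.mul ?_
      refine (integrable_finsetSum _ fun i _ => ((chi_test n).pd i).integrable_mul
        (hF1 i).locallyIntegrable).1
    · exact integrable_finsetSum _ fun i _ => (hF1 i).abs.const_mul C
    · intro n
      filter_upwards [hu.bd] with x hx
      rw [Real.norm_eq_abs, abs_mul]
      refine (mul_le_of_le_one_left (abs_nonneg _) hx).trans ?_
      refine (Finset.abs_sum_le_sum_abs _ _).trans (Finset.sum_le_sum fun i _ => ?_)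
      rw [abs_mul]
      gcongr
      refine (hC n i x).trans (mul_le_of_le_one_right hC0 ?_)
      rw [div_le_one (by positivity)]
      have : (0:ℝ) ≤ n := by positivity
      linarith
    · refine ae_of_all _ fun x => ?_
      have hz : ∀ i, Tendsto (fun n => pd i (chi n) x) atTop (𝓝 0) := by
        intro i
        refine squeeze_zero_norm (fun n => hC n i x) ?_
        simpa using tendsto_one_div_add_atTop_nhds_zero_nat.const_mul C
      have := (tendsto_finsetSum Finset.univ fun i _ => (hz i).mul_const (F i x)).const_mul (u x)
      simpa using this
  have E := tendsto_nhds_unique l1 (l2.neg.congr fun n => (weak_jac hu hF hdiv (chi_test n)).symm)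
  simpa using E

/-! ### Part 6: consequences for Skyrme maps -/

lemma memLp_of_sq_le {f E : R3 → ℝ} (hf : AEStronglyMeasurable f volume) (hE : Integrable E)
    (h : ∀ x, f x ^ 2 ≤ E x) : MemLp f 2 volume := by
  rw [memLp_two_iff_integrable_sq hf]
  refine hE.mono' (hf.pow 2) (ae_of_all _ fun x => ?_)
  rw [Real.norm_eq_abs, abs_of_nonneg (sq_nonneg _)]
  exact h x

lemma comp_meas (φ : SkyrmeMap) (i : Fin 3) (a : Fin 4) :
    AEStronglyMeasurable (fun x => φ.pderiv i x a) volume :=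
  (continuous_apply a).comp_aestronglyMeasurable (φ.pderiv_locInt i).aestronglyMeasurable

lemma comp_memLp {φ : SkyrmeMap} (hX : memX φ) (i : Fin 3) (a : Fin 4) :
    MemLp (fun x => φ.pderiv i x a) 2 volume := by
  refine memLp_of_sq_le (comp_meas φ i a) hX fun x => ?_
  exact (sq_le_nsq _ a).trans ((nsq_le_gradSq φ x i).trans
    (le_add_of_nonneg_right (ASq_nonneg φ x)))

lemma comp_WD {φ : SkyrmeMap} (hX : memX φ) (a : Fin 4) :
    WD (fun x => φ.toFun x a) (fun i x => φ.pderiv i x a) where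
  meas := (measurable_pi_apply a).comp φ.meas
  bd := by
    filter_upwards [φ.sphere] with x hx
    have := sq_le_nsq (φ.toFun x) a
    rw [hx] at this
    exact (sq_le_one_iff_abs_le_one _).1 this
  memLp := fun i => comp_memLp hX i a
  weak := fun i ψ hψ => φ.weak i a ψ hψ

lemma orth {φ : SkyrmeMap} (hX : memX φ) (i : Fin 3) :
    ∀ᵐ x, dot (φ.toFun x) (φ.pderiv i x) = 0 := by
  have li : ∀ a, LocallyIntegrable (fun x => φ.toFun x a * φ.pderiv i x a) := by
    intro a
    have h1 : MemLp (fun x => φ.toFun x a * φ.pderiv i x a) 2 volume :=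
      (comp_memLp hX i a).mul (comp_WD hX a).memLpTop
    exact h1.locallyIntegrable (by norm_num)
  have L : LocallyIntegrable (fun x => dot (φ.toFun x) (φ.pderiv i x)) := by
    unfold dot
    exact locallyIntegrable_finsetSum _ fun a _ => li a
  refine ae_eq_zero_of_integral_contDiff_smul_eq_zero L ?_
  intro g hg hc
  have hψ : IsTestFun g := ⟨hg, hc⟩
  have e : ∀ a, ∫ x, g x * (φ.toFun x a * φ.pderiv i x a)
      = - (1/2) * ∫ x, pd i g x * (φ.toFun x a * φ.toFun x a) := by
    intro a; rw [sq_weak (comp_WD hX a) i hψ]; ring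
  have i1 : ∀ a, Integrable (fun x => pd i g x * (φ.toFun x a * φ.toFun x a)) := by
    intro a
    refine ((comp_WD hX a).mul_integrable ((hψ.pd i).integrable_mul (comp_WD hX a).locInt)).congr
      (ae_of_all _ fun x => ?_)
    simp only; ring
  calc ∫ x, g x • dot (φ.toFun x) (φ.pderiv i x)
      = ∫ x, ∑ a, g x * (φ.toFun x a * φ.pderiv i x a) := by
        refine integral_congr_ae (ae_of_all _ fun x => ?_)
        simp only [dot, smul_eq_mul, Finset.mul_sum]
    _ = ∑ a, ∫ x, g x * (φ.toFun x a * φ.pderiv i x a) :=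
        integral_finsetSum _ fun a _ => hψ.integrable_mul (li a)
    _ = - (1/2) * ∑ a, ∫ x, pd i g x * (φ.toFun x a * φ.toFun x a) := by
        rw [Finset.mul_sum]; exact Finset.sum_congr rfl fun a _ => e a
    _ = - (1/2) * ∫ x, ∑ a, pd i g x * (φ.toFun x a * φ.toFun x a) := by
        rw [integral_finsetSum _ fun a _ => i1 a]
    _ = - (1/2) * ∫ x, pd i g x := by
        congr 1
        refine integral_congr_ae ?_
        filter_upwards [φ.sphere] with x hx
        rw [← Finset.mul_sum]
        unfold nsq dot at hx
        rw [hx, mul_one]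
    _ = 0 := by rw [integral_pd hψ, mul_zero]

lemma good_ae {φ : SkyrmeMap} (hX : memX φ) :
    ∀ᵐ x, nsq (φ.toFun x) = 1 ∧ ∀ i, dot (φ.toFun x) (φ.pderiv i x) = 0 := by
  filter_upwards [φ.sphere, ae_all_iff.2 (orth hX)] with x h1 h2 using ⟨h1, h2⟩

lemma toFun_meas (φ : SkyrmeMap) (a : Fin 4) : Measurable (fun x => φ.toFun x a) :=
  (measurable_pi_apply a).comp φ.meas

lemma detDen_meas (φ : SkyrmeMap) : AEStronglyMeasurable (detDen φ) volume := by
  have e : detDen φ = fun x => det4 (φ.toFun x) (φ.pderiv 0 x) (φ.pderiv 1 x) (φ.pderiv 2 x) := rfl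
  rw [e]
  simp only [det4_expand, minor3]
  have h := comp_meas φ
  have h' := fun a => (toFun_meas φ a).aestronglyMeasurable (μ := volume)
  fun_prop

lemma detDen_int {φ : SkyrmeMap} (hX : memX φ) : Integrable (detDen φ) := by
  refine (hX.const_mul 3).mono' (detDen_meas φ) ?_
  filter_upwards [good_ae hX] with x hx
  exact detDen_abs_le φ x hx.1 hx.2

lemma crs_memLp {φ : SkyrmeMap} (hX : memX φ) (a b : Fin 4) (i : Fin 3) :
    MemLp (crs (fun i x => φ.pderiv i x a) (fun i x => φ.pderiv i x b) i) 2 volume := by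
  have h := comp_meas φ
  refine memLp_of_sq_le ?_ hX fun x => ?_
  · unfold crs; fun_prop
  · have := minor2_le (φ.pderiv (i+1) x) (φ.pderiv (i+2) x) a b
    refine le_trans ?_ (this.trans ((wedge_le_ASq φ x _ _).trans
      (le_add_of_nonneg_left (gradSq_nonneg φ x))))
    unfold crs
    apply le_of_eq; ring

lemma crs_int {φ : SkyrmeMap} (hX : memX φ) (a b : Fin 4) (i : Fin 3) :
    Integrable (crs (fun i x => φ.pderiv i x a) (fun i x => φ.pderiv i x b) i) :=
  (int_mul (comp_memLp hX _ a) (comp_memLp hX _ b)).sub'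
    (int_mul (comp_memLp hX _ a) (comp_memLp hX _ b))

lemma int_u_det {φ : SkyrmeMap} (hX : memX φ) : ∫ x, φ.toFun x 3 * detDen φ x = 0 := by
  have J := jac_zero (comp_WD hX 0) (crs_memLp hX 1 2) (crs_int hX 1 2)
    (fun ψ hψ => div_free (comp_WD hX 1) (comp_WD hX 2) hψ)
  rw [← neg_eq_zero, ← integral_neg, ← J]
  refine integral_congr_ae ?_
  filter_upwards [good_ae hX] with x hx
  have := (three_mul_det _ _ _ _ hx.1 (hx.2 0) (hx.2 1) (hx.2 2)).2.2.2
  unfold detDen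
  rw [this, neg_neg]
  simp only [Fin.sum_univ_three, crs, minor3]
  have a1 : (1 : Fin 3) + 1 = 2 := rfl
  have a2 : (1 : Fin 3) + 2 = 0 := rfl
  have a3 : (2 : Fin 3) + 1 = 0 := rfl
  have a4 : (2 : Fin 3) + 2 = 1 := rfl
  simp only [a1, a2, a3, a4, zero_add]
  ring

lemma int_det {φ : SkyrmeMap} (hX : memX φ) :
    |∫ x, detDen φ x| ≤ ∫ x, (1 - φ.toFun x 3) * |detDen φ x| := by
  have e : ∫ x, detDen φ x = ∫ x, (1 - φ.toFun x 3) * detDen φ x := by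
    have : ∀ x, (1 - φ.toFun x 3) * detDen φ x = detDen φ x - φ.toFun x 3 * detDen φ x :=
      fun x => by ring
    simp only [this]
    rw [integral_sub (detDen_int hX) ((comp_WD hX 3).mul_integrable (detDen_int hX)), int_u_det hX,
      sub_zero]
  rw [e]
  refine (abs_integral_le_integral_abs).trans (le_of_eq (integral_congr_ae ?_))
  filter_upwards [(comp_WD hX 3).bd] with x hx
  rw [abs_mul, abs_of_nonneg (by linarith [(abs_le.1 hx).2] : (0:ℝ) ≤ 1 - φ.toFun x 3)]

/-! ### Part 7: translation estimate -/

lemma enorm_sq_real (a : ℝ) : ‖a‖ₑ ^ 2 = ENNReal.ofReal (a ^ 2) := by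
  rw [Real.enorm_eq_ofReal_abs, ← ENNReal.ofReal_pow (abs_nonneg _), sq_abs]

lemma fderiv_pd {g : R3 → ℝ} (x v : R3) : fderiv ℝ g x v = ∑ i, v i * pd i g x := by
  have : v = ∑ i, v i • (Pi.single i 1 : R3) := by
    ext j; simp [Finset.sum_apply, Pi.single_apply]
  conv_lhs => rw [this, map_sum]
  simp [pd]

lemma fderiv_bound {g : R3 → ℝ} (x v : R3) {r : ℝ} (hv : ∀ i, |v i| ≤ r) :
    ‖fderiv ℝ g x v‖ₑ ^ 2 ≤ ENNReal.ofReal (3 * r ^ 2) * ∑ i, ‖pd i g x‖ₑ ^ 2 := by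
  simp only [enorm_sq_real]
  rw [← ENNReal.ofReal_sum_of_nonneg (fun _ _ => sq_nonneg _), ← ENNReal.ofReal_mul (by positivity)]
  apply ENNReal.ofReal_le_ofReal
  rw [fderiv_pd]
  have cs := Finset.sum_mul_sq_le_sq_mul_sq Finset.univ v (fun i => pd i g x)
  refine cs.trans ?_
  gcongr
  · calc ∑ i, v i ^ 2 ≤ ∑ _i : Fin 3, r ^ 2 := Finset.sum_le_sum fun i _ => by
          rw [← sq_abs]; exact pow_le_pow_left₀ (abs_nonneg _) (hv i) 2
      _ = 3 * r ^ 2 := by simp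

lemma smooth_trans {g : R3 → ℝ} (hg : ContDiff ℝ (⊤ : ℕ∞) g) (v : R3) :
    ∫⁻ x, ‖g (x - v) - g x‖ₑ ^ 2 ≤ ∫⁻ x, ‖fderiv ℝ g x v‖ₑ ^ 2 := by
  have hc : Continuous (fun z : R3 × ℝ => fderiv ℝ g (z.1 - z.2 • v) v) := by
    have : Continuous (fderiv ℝ g) := hg.continuous_fderiv (by simp)
    fun_prop
  have e : ∀ x, g (x - v) - g x = ∫ t in Set.Ioc (0:ℝ) 1, - fderiv ℝ g (x - t • v) v := by
    intro x
    have hd : ∀ t : ℝ, HasDerivAt (fun t : ℝ => g (x - t • v)) (- fderiv ℝ g (x - t • v) v) t := by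
      intro t
      have h1 : HasDerivAt (fun t : ℝ => x - t • v) (-v) t := by
        simpa using ((hasDerivAt_id t).smul_const v).const_sub x
      have h2 := (hg.differentiable (by simp) (x - t • v)).hasFDerivAt.comp_hasDerivAt t h1
      rw [map_neg] at h2
      exact h2
    have h3 := intervalIntegral.integral_eq_sub_of_hasDerivAt (a := 0) (b := 1) (fun t _ => hd t)
      ((hc.comp (by fun_prop : Continuous fun t : ℝ => (x, t))).neg.intervalIntegrable 0 1)
    rw [intervalIntegral.integral_of_le (by norm_num)] at h3
    rw [h3]; simp
  have : IsProbabilityMeasure (volume.restrict (Set.Ioc (0:ℝ) 1)) := ⟨by simp⟩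
  calc ∫⁻ x, ‖g (x - v) - g x‖ₑ ^ 2
      ≤ ∫⁻ x, ∫⁻ t in Set.Ioc (0:ℝ) 1, ‖fderiv ℝ g (x - t • v) v‖ₑ ^ 2 := by
        refine lintegral_mono fun x => ?_
        simp only
        rw [e x]
        refine (jensen_sq _ _ ?_).trans (le_of_eq ?_)
        · exact (hc.comp (by fun_prop : Continuous fun t : ℝ => (x, t))).neg.aestronglyMeasurable
        · simp
    _ = ∫⁻ t in Set.Ioc (0:ℝ) 1, ∫⁻ x, ‖fderiv ℝ g (x - t • v) v‖ₑ ^ 2 := by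
        refine lintegral_lintegral_swap ?_
        exact (hc.enorm.measurable.pow_const 2).aemeasurable
    _ = ∫⁻ t in Set.Ioc (0:ℝ) 1, ∫⁻ x, ‖fderiv ℝ g x v‖ₑ ^ 2 := by
        refine lintegral_congr fun t => ?_
        exact lintegral_sub_right_eq_self (fun x => ‖fderiv ℝ g x v‖ₑ ^ 2) (t • v)
    _ = ∫⁻ x, ‖fderiv ℝ g x v‖ₑ ^ 2 := by simp

lemma trans_est {u p} (h : WD u p) (v : R3) {r : ℝ} (hv : ∀ i, |v i| ≤ r) :
    ∫⁻ x, ‖u (x - v) - u x‖ₑ ^ 2 ≤ ENNReal.ofReal (3 * r ^ 2) * ∑ i, ∫⁻ x, ‖p i x‖ₑ ^ 2 := by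
  obtain ⟨g, gs, gb, gt, gd⟩ := approx h
  have gt' : ∀ᵐ x, Tendsto (fun m => g m (x - v)) atTop (𝓝 (u (x - v))) :=
    (measurePreserving_sub_right volume v).quasiMeasurePreserving.ae gt
  have e : ∫⁻ x, ‖u (x - v) - u x‖ₑ ^ 2
      = ∫⁻ x, liminf (fun m => ‖g m (x - v) - g m x‖ₑ ^ 2) atTop := by
    refine lintegral_congr_ae ?_
    filter_upwards [gt, gt'] with x h1 h2
    have h3 := (h2.sub h1).enorm
    exact ((ENNReal.continuous_pow 2).tendsto _ |>.comp h3).liminf_eq.symm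
  rw [e]
  have hm : ∀ m, Measurable (fun x => ‖g m (x - v) - g m x‖ₑ ^ 2) := by
    intro m
    have := (gs m).continuous
    have h1 : Continuous (fun x => g m (x - v) - g m x) := by fun_prop
    exact h1.enorm.measurable.pow_const 2
  refine (lintegral_liminf_le hm).trans ?_
  have ub : ∀ m, ∫⁻ x, ‖g m (x - v) - g m x‖ₑ ^ 2 ≤ ENNReal.ofReal (3 * r ^ 2) *
      ∑ i, (eLpNorm (fun x => pd i (g m) x - p i x) 2 volume + eLpNorm (p i) 2 volume) ^ 2 := by
    intro m
    refine (smooth_trans (gs m) v).trans ((lintegral_mono fun x => fderiv_bound x v hv).trans ?_)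
    have mm : ∀ i, Measurable (fun x => ‖pd i (g m) x‖ₑ ^ 2) := fun i =>
      (smooth_pd i (gs m)).continuous.enorm.measurable.pow_const 2
    rw [lintegral_const_mul _ (Finset.measurable_sum _ fun i _ => mm i),
      lintegral_finsetSum _ fun i _ => mm i]
    gcongr with i
    rw [← eLpNorm_two_sq]
    gcongr
    have := eLpNorm_add_le (p := 2) (μ := (volume : Measure R3)) (f := fun x => pd i (g m) x - p i x) (g := p i)
      ((smooth_pd i (gs m)).continuous.aestronglyMeasurable.sub (h.memLp i).1) (h.memLp i).1
      (by norm_num)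
    refine le_trans (le_of_eq ?_) this
    congr 1; ext x; simp
  have lim : Tendsto (fun m => ENNReal.ofReal (3 * r ^ 2) *
      ∑ i, (eLpNorm (fun x => pd i (g m) x - p i x) 2 volume + eLpNorm (p i) 2 volume) ^ 2) atTop
      (𝓝 (ENNReal.ofReal (3 * r ^ 2) * ∑ i, ∫⁻ x, ‖p i x‖ₑ ^ 2)) := by
    refine ENNReal.Tendsto.const_mul (tendsto_finsetSum _ fun i _ => ?_) (Or.inr ENNReal.ofReal_ne_top)
    rw [← eLpNorm_two_sq]
    have h1 := (gd i).add_const (eLpNorm (p i) 2 volume)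
    rw [zero_add] at h1
    exact (ENNReal.continuous_pow 2).tendsto _ |>.comp h1
  exact (liminf_le_liminf (Eventually.of_forall ub)).trans (le_of_eq lim.liminf_eq)

/-! ### Part 8: the averaging argument -/

/-- the full density -/
def fden (φ : SkyrmeMap) (x : R3) : ℝ :=
  energyDensity φ x + (nsq (φ.toFun x - northPole)) ^ 3

lemma fden_nonneg (φ : SkyrmeMap) (x : R3) : 0 ≤ fden φ x :=
  add_nonneg (energyDensity_nonneg φ x) (pow_nonneg (nsq_nonneg _) 3)

lemma energy_le_fden (φ : SkyrmeMap) (x : R3) : energyDensity φ x ≤ fden φ x :=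
  le_add_of_nonneg_right (pow_nonneg (nsq_nonneg _) 3)

lemma eball_open (y : R3) (r : ℝ) : IsOpen (eball y r) := by
  unfold eball
  exact isOpen_lt (by fun_prop) continuous_const

lemma eball_coord {v : R3} {r : ℝ} (hr : 0 < r) (hv : v ∈ eball 0 r) (i : Fin 3) : |v i| ≤ r := by
  have h1 : ∑ i, (v i - (0 : R3) i) ^ 2 < r ^ 2 := hv
  simp only [Pi.zero_apply, sub_zero] at h1
  have h2 := Finset.single_le_sum (f := fun i => v i ^ 2) (fun _ _ => sq_nonneg _) (Finset.mem_univ i)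
  exact abs_le_of_sq_le_sq (h2.trans h1.le) hr.le

lemma eball_vol_pos {r : ℝ} (hr : 0 < r) : 0 < volume (eball 0 r) := by
  refine (eball_open 0 r).measure_pos volume ⟨0, ?_⟩
  show ∑ i, ((0 : R3) i - (0 : R3) i) ^ 2 < r ^ 2
  simp; positivity

lemma eball_vol_lt {r : ℝ} (hr : 0 < r) : volume (eball 0 r) < ⊤ := by
  have hs : eball 0 r ⊆ Metric.closedBall 0 r := by
    intro v hv
    rw [mem_closedBall_zero_iff, pi_norm_le_iff_of_nonneg hr.le]
    exact fun i => eball_coord hr hv i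
  exact (measure_mono hs).trans_lt measure_closedBall_lt_top

lemma eball_subst (G : R3 → ℝ≥0∞) (x : R3) (r : ℝ) :
    ∫⁻ v in eball 0 r, G (x - v) = ∫⁻ y in eball x r, G y := by
  rw [← lintegral_indicator (eball_open 0 r).measurableSet,
    ← lintegral_indicator (eball_open x r).measurableSet,
    ← lintegral_sub_left_eq_self ((eball x r).indicator fun y => G y) x]
  refine lintegral_congr fun v => ?_
  have : v ∈ eball 0 r ↔ x - v ∈ eball x r := by
    simp [eball]
  by_cases hv : v ∈ eball 0 r
  · rw [Set.indicator_of_mem hv, Set.indicator_of_mem (this.1 hv)]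
  · rw [Set.indicator_of_notMem hv, Set.indicator_of_notMem (fun h => hv (this.2 h))]

lemma eball_vol (x : R3) (r : ℝ) : volume (eball x r) = volume (eball 0 r) := by
  have := eball_subst (fun _ => 1) x r
  simpa using this.symm

lemma one_shift {φ : SkyrmeMap} (hX : memX φ) {r lam : ℝ} (hl : 0 < lam) {v : R3}
    (hv : ∀ i, |v i| ≤ r) :
    ∫⁻ x, ENNReal.ofReal (1 - φ.toFun x 3) * ‖detDen φ x‖ₑ ≤
      (∫⁻ x, ENNReal.ofReal (1 - φ.toFun (x - v) 3) * ‖detDen φ x‖ₑ)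
      + ENNReal.ofReal (lam + 1152 / lam ^ 3 * (3 * r ^ 2))
        * ∫⁻ x, ENNReal.ofReal (energyDensity φ x) := by
  set u : R3 → ℝ := fun x => φ.toFun x 3 with hu
  have hW := comp_WD hX 3
  have hb' : ∀ᵐ x, |u (x - v)| ≤ 1 :=
    (measurePreserving_sub_right volume v).quasiMeasurePreserving.ae hW.bd
  have um : Measurable u := toFun_meas φ 3
  have pt : ∀ᵐ x, ENNReal.ofReal (1 - u x) * ‖detDen φ x‖ₑ ≤
      ENNReal.ofReal (1 - u (x - v)) * ‖detDen φ x‖ₑ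
      + (ENNReal.ofReal lam * ENNReal.ofReal (energyDensity φ x)
        + ENNReal.ofReal (1152 / lam ^ 3) * ‖u (x - v) - u x‖ₑ ^ 2) := by
    filter_upwards [hW.bd, hb', good_ae hX] with x h1 h2 h3
    have b1 := abs_le.1 (show |u x| ≤ 1 from h1)
    have b2 := abs_le.1 h2
    have y := young_pt (u (x - v) - u x) (detDen φ x) (Real.sqrt (ASq φ x)) lam hl
      (Real.sqrt_nonneg _) (by nlinarith) (detDen_sq φ x h3.1 h3.2)
    rw [Real.sq_sqrt (ASq_nonneg φ x), abs_mul] at y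
    rw [Real.enorm_eq_ofReal_abs, enorm_sq_real,
      ← ENNReal.ofReal_mul (by linarith), ← ENNReal.ofReal_mul (by linarith),
      ← ENNReal.ofReal_mul hl.le, ← ENNReal.ofReal_mul (by positivity),
      ← ENNReal.ofReal_add (mul_nonneg hl.le (energyDensity_nonneg φ x)) (by positivity),
      ← ENNReal.ofReal_add (mul_nonneg (by linarith) (abs_nonneg _))
        (add_nonneg (mul_nonneg hl.le (energyDensity_nonneg φ x)) (by positivity))]
    apply ENNReal.ofReal_le_ofReal
    have h4 : lam * ASq φ x ≤ lam * energyDensity φ x :=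
      mul_le_mul_of_nonneg_left (le_add_of_nonneg_left (gradSq_nonneg φ x)) hl.le
    have h5 := mul_le_mul_of_nonneg_right (le_abs_self (u (x - v) - u x)) (abs_nonneg (detDen φ x))
    nlinarith
  have Dm : AEMeasurable (fun x => ‖detDen φ x‖ₑ) volume := (detDen_meas φ).enorm
  have Em : AEMeasurable (fun x => ENNReal.ofReal (energyDensity φ x)) volume :=
    hX.1.aemeasurable.ennreal_ofReal
  have Sm : Measurable (fun x => u (x - v)) := um.comp (measurable_id.sub_const v)
  have Tm : Measurable (fun x => ‖u (x - v) - u x‖ₑ ^ 2) := (Sm.sub um).enorm.pow_const 2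
  have t := trans_est hW v hv
  have t2 : ∑ i, ∫⁻ x, ‖φ.pderiv i x 3‖ₑ ^ 2 ≤ ∫⁻ x, ENNReal.ofReal (energyDensity φ x) := by
    rw [← lintegral_finsetSum' _ fun i _ => (comp_meas φ i 3).enorm.pow_const 2]
    refine lintegral_mono fun x => ?_
    simp only [enorm_sq_real]
    rw [← ENNReal.ofReal_sum_of_nonneg (fun _ _ => sq_nonneg _)]
    apply ENNReal.ofReal_le_ofReal
    exact (Finset.sum_le_sum fun i _ => sq_le_nsq (φ.pderiv i x) 3).trans
      (le_add_of_nonneg_right (ASq_nonneg φ x))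
  calc ∫⁻ x, ENNReal.ofReal (1 - u x) * ‖detDen φ x‖ₑ
      ≤ ∫⁻ x, (ENNReal.ofReal (1 - u (x - v)) * ‖detDen φ x‖ₑ
      + (ENNReal.ofReal lam * ENNReal.ofReal (energyDensity φ x)
        + ENNReal.ofReal (1152 / lam ^ 3) * ‖u (x - v) - u x‖ₑ ^ 2)) := lintegral_mono_ae pt
    _ = (∫⁻ x, ENNReal.ofReal (1 - u (x - v)) * ‖detDen φ x‖ₑ)
      + (ENNReal.ofReal lam * (∫⁻ x, ENNReal.ofReal (energyDensity φ x))
        + ENNReal.ofReal (1152 / lam ^ 3) * ∫⁻ x, ‖u (x - v) - u x‖ₑ ^ 2) := by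
        have m1 : AEMeasurable (fun x => ENNReal.ofReal (1 - u (x - v)) * ‖detDen φ x‖ₑ) volume :=
          (Sm.const_sub 1).ennreal_ofReal.aemeasurable.mul Dm
        rw [lintegral_add_left' m1,
          lintegral_add_left' (Em.const_mul _), lintegral_const_mul'' _ Em,
          lintegral_const_mul _ Tm]
    _ ≤ (∫⁻ x, ENNReal.ofReal (1 - u (x - v)) * ‖detDen φ x‖ₑ)
      + (ENNReal.ofReal lam * (∫⁻ x, ENNReal.ofReal (energyDensity φ x))
        + ENNReal.ofReal (1152 / lam ^ 3) * (ENNReal.ofReal (3 * r ^ 2) *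
          ∫⁻ x, ENNReal.ofReal (energyDensity φ x))) := by
        gcongr
        exact t.trans (mul_le_mul_right t2 _)
    _ = _ := by
        rw [← mul_assoc, ← ENNReal.ofReal_mul (by positivity), ← add_mul,
          ← ENNReal.ofReal_add hl.le (by positivity)]

lemma w_le {φ : SkyrmeMap} {mu : ℝ} (hm : 0 < mu) :
    ∀ᵐ x, ENNReal.ofReal (1 - φ.toFun x 3) ≤
      ENNReal.ofReal mu + ENNReal.ofReal (1 / mu ^ 2) * ENNReal.ofReal (fden φ x) := by
  filter_upwards [φ.sphere] with x hx
  rw [← ENNReal.ofReal_mul (by positivity),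
    ← ENNReal.ofReal_add hm.le (mul_nonneg (by positivity) (fden_nonneg φ x))]
  apply ENNReal.ofReal_le_ofReal
  set w := 1 - φ.toFun x 3 with hw
  have hn : nsq (φ.toFun x - northPole) = 2 * w := by
    simp only [nsq, dot_expand, northPole] at hx ⊢
    simp
    nlinarith
  have hw0 : 0 ≤ w := by have := nsq_nonneg (φ.toFun x - northPole); linarith
  have h1 : w ^ 3 ≤ fden φ x := by
    unfold fden
    rw [hn]
    have := energyDensity_nonneg φ x
    have := pow_nonneg hw0 3
    nlinarith
  have h2 : w ≤ mu + 1 / mu ^ 2 * w ^ 3 := by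
    rw [one_div_mul_eq_div, ← sub_le_iff_le_add', le_div_iff₀ (by positivity)]
    by_cases hc : w ≤ mu
    · have : (w - mu) * mu ^ 2 ≤ 0 := mul_nonpos_of_nonpos_of_nonneg (by linarith) (by positivity)
      have := pow_nonneg hw0 3
      linarith
    · have hc' : mu ≤ w := by linarith
      have h3 : mu ^ 2 ≤ w ^ 2 := pow_le_pow_left₀ hm.le hc' 2
      have h4 : (w - mu) * mu ^ 2 ≤ w * w ^ 2 := by
        apply mul_le_mul _ h3 (by positivity) hw0
        linarith
      linarith [show w * w ^ 2 = w ^ 3 by ring]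
  refine h2.trans ?_
  gcongr

lemma averaged {φ : SkyrmeMap} (hX : memX φ) {r lam mu : ℝ} (hr : 0 < r) (hl : 0 < lam)
    (hm : 0 < mu) (S : ℝ≥0∞)
    (hS : ∀ y, ∫⁻ x in eball y r, ENNReal.ofReal (fden φ x) ≤ S) :
    volume (eball 0 r) * ∫⁻ x, ENNReal.ofReal (1 - φ.toFun x 3) * ‖detDen φ x‖ₑ ≤
      (ENNReal.ofReal mu * volume (eball 0 r) + ENNReal.ofReal (1 / mu ^ 2) * S)
        * (∫⁻ x, ‖detDen φ x‖ₑ)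
      + ENNReal.ofReal (lam + 1152 / lam ^ 3 * (3 * r ^ 2))
        * (∫⁻ x, ENNReal.ofReal (energyDensity φ x)) * volume (eball 0 r) := by
  set c := ENNReal.ofReal (lam + 1152 / lam ^ 3 * (3 * r ^ 2))
        * ∫⁻ x, ENNReal.ofReal (energyDensity φ x) with hc
  have Dm : AEMeasurable (fun x => ‖detDen φ x‖ₑ) volume := (detDen_meas φ).enorm
  have Wm : Measurable (fun x => ENNReal.ofReal (1 - φ.toFun x 3)) :=
    ((toFun_meas φ 3).const_sub 1).ennreal_ofReal
  have step : ∫⁻ _v in eball 0 r, (∫⁻ x, ENNReal.ofReal (1 - φ.toFun x 3) * ‖detDen φ x‖ₑ) ≤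
      ∫⁻ v in eball 0 r, ((∫⁻ x, ENNReal.ofReal (1 - φ.toFun (x - v) 3) * ‖detDen φ x‖ₑ) + c) := by
    refine setLIntegral_mono' (eball_open 0 r).measurableSet fun v hv => ?_
    exact one_shift hX hl (eball_coord hr hv)
  rw [setLIntegral_const, mul_comm, lintegral_add_right _ measurable_const, setLIntegral_const] at step
  refine step.trans ?_
  gcongr
  rw [lintegral_lintegral_swap]
  · calc ∫⁻ x, ∫⁻ v in eball 0 r, ENNReal.ofReal (1 - φ.toFun (x - v) 3) * ‖detDen φ x‖ₑ
        = ∫⁻ x, (∫⁻ y in eball x r, ENNReal.ofReal (1 - φ.toFun y 3)) * ‖detDen φ x‖ₑ := by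
          refine lintegral_congr fun x => ?_
          have m1 : Measurable (fun v => ENNReal.ofReal (1 - φ.toFun (x - v) 3)) :=
            Wm.comp (measurable_id.const_sub x)
          rw [lintegral_mul_const _ m1,
            eball_subst (fun y => ENNReal.ofReal (1 - φ.toFun y 3))]
      _ ≤ ∫⁻ x, (ENNReal.ofReal mu * volume (eball 0 r) + ENNReal.ofReal (1 / mu ^ 2) * S)
          * ‖detDen φ x‖ₑ := by
          refine lintegral_mono fun x => ?_
          refine mul_le_mul_left ?_ _
          refine (lintegral_mono_ae (ae_restrict_of_ae (w_le hm))).trans ?_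
          rw [lintegral_add_left measurable_const, setLIntegral_const, eball_vol,
            lintegral_const_mul' _ _ ENNReal.ofReal_ne_top]
          gcongr
          exact hS x
      _ = _ := lintegral_const_mul'' _ Dm
  · refine AEMeasurable.mul (f := fun z : R3 × R3 => ENNReal.ofReal (1 - φ.toFun (z.2 - z.1) 3))
      (g := fun z : R3 × R3 => ‖detDen φ z.2‖ₑ) ?_ ?_
    · exact (Wm.comp (measurable_snd.sub measurable_fst)).aemeasurable
    · exact Dm.comp_quasiMeasurePreserving Measure.quasiMeasurePreserving_snd

lemma final_est {φ : SkyrmeMap} (hX : memX φ) (hf : Integrable (fden φ)) {M : ℝ}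
    (hM : ∫ x, fden φ x ≤ M) {r lam mu : ℝ} (hr : 0 < r) (hl : 0 < lam) (hm : 0 < mu) :
    (volume (eball 0 r)).toReal * |∫ x, detDen φ x| ≤
      (mu * (volume (eball 0 r)).toReal + 1 / mu ^ 2 * ⨆ y : R3, ∫ x in eball y r, fden φ x)
        * (3 * M)
      + (lam + 1152 / lam ^ 3 * (3 * r ^ 2)) * M * (volume (eball 0 r)).toReal := by
  set S := ⨆ y : R3, ∫ x in eball y r, fden φ x with hSdef
  have hM0 : 0 ≤ M := (integral_nonneg (fden_nonneg φ)).trans hM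
  have bdd : BddAbove (Set.range fun y : R3 => ∫ x in eball y r, fden φ x) := by
    refine ⟨∫ x, fden φ x, ?_⟩
    rintro _ ⟨y, rfl⟩
    exact setIntegral_le_integral hf (ae_of_all _ (fden_nonneg φ))
  have hSy : ∀ y, ∫ x in eball y r, fden φ x ≤ S := fun y => le_ciSup bdd y
  have hS0 : 0 ≤ S := (integral_nonneg (fden_nonneg φ)).trans (hSy 0)
  have A := averaged hX hr hl hm (ENNReal.ofReal S) (fun y => by
    rw [← ofReal_integral_eq_lintegral_ofReal hf.integrableOn (ae_of_all _ (fden_nonneg φ))]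
    exact ENNReal.ofReal_le_ofReal (hSy y))
  have hE : ∫⁻ x, ENNReal.ofReal (energyDensity φ x) ≤ ENNReal.ofReal M := by
    rw [← ofReal_integral_eq_lintegral_ofReal hX (ae_of_all _ (energyDensity_nonneg φ))]
    exact ENNReal.ofReal_le_ofReal ((integral_mono hX hf (energy_le_fden φ)).trans hM)
  have hD : ∫⁻ x, ‖detDen φ x‖ₑ ≤ ENNReal.ofReal (3 * M) := by
    rw [ENNReal.ofReal_mul (by norm_num)]
    refine le_trans ?_ (mul_le_mul_right hE _)
    rw [← lintegral_const_mul' _ _ ENNReal.ofReal_ne_top]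
    refine lintegral_mono_ae ?_
    filter_upwards [good_ae hX] with x hx
    rw [Real.enorm_eq_ofReal_abs, ← ENNReal.ofReal_mul (by norm_num)]
    exact ENNReal.ofReal_le_ofReal (detDen_abs_le φ x hx.1 hx.2)
  have hI : ENNReal.ofReal |∫ x, detDen φ x| ≤
      ∫⁻ x, ENNReal.ofReal (1 - φ.toFun x 3) * ‖detDen φ x‖ₑ := by
    have nn : ∀ᵐ x, 0 ≤ (1 - φ.toFun x 3) * |detDen φ x| := by
      filter_upwards [(comp_WD hX 3).bd] with x hx
      exact mul_nonneg (by linarith [(abs_le.1 hx).2]) (abs_nonneg _)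
    have ii : Integrable (fun x => (1 - φ.toFun x 3) * |detDen φ x|) := by
      refine ((detDen_int hX).abs.sub' ((comp_WD hX 3).mul_integrable (detDen_int hX).abs)).congr
        (ae_of_all _ fun x => ?_)
      simp only; ring
    refine (ENNReal.ofReal_le_ofReal (int_det hX)).trans ?_
    rw [ofReal_integral_eq_lintegral_ofReal ii nn]
    refine lintegral_mono_ae ?_
    filter_upwards [(comp_WD hX 3).bd] with x hx
    rw [ENNReal.ofReal_mul (by linarith [(abs_le.1 hx).2]), Real.enorm_eq_ofReal_abs]
  set b := (volume (eball 0 r)).toReal with hb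
  have hv : volume (eball 0 r) = ENNReal.ofReal b := (ENNReal.ofReal_toReal (eball_vol_lt hr).ne).symm
  have hb0 : 0 ≤ b := ENNReal.toReal_nonneg
  rw [hv] at A
  have B := (mul_le_mul_right hI (ENNReal.ofReal b)).trans (A.trans (add_le_add
    (mul_le_mul_right hD _) (mul_le_mul_left (mul_le_mul_right hE _) _)))
  rw [← ENNReal.ofReal_mul hb0, ← ENNReal.ofReal_mul hm.le, ← ENNReal.ofReal_mul (by positivity),
    ← ENNReal.ofReal_add (by positivity) (by positivity), ← ENNReal.ofReal_mul (by positivity),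
    ← ENNReal.ofReal_mul (by positivity), ← ENNReal.ofReal_mul (by positivity),
    ← ENNReal.ofReal_add (by positivity) (by positivity)] at B
  exact (ENNReal.ofReal_le_ofReal_iff (by positivity)).1 B

/-! ### Part 9: the theorem -/

/-- no vanishing for sequences of fixed nonzero degree with bounded f_n. -/
theorem skyrme_no_vanishing (k : ℤ) (hk : k ≠ 0)
    (φ : ℕ → SkyrmeMap) (hX : ∀ n, memX (φ n))
    (hdeg : ∀ n, degree (φ n) = (k : ℝ))
    (hint : ∀ n, Integrable
      (fun x => energyDensity (φ n) x + (nsq ((φ n).toFun x - northPole)) ^ 3) volume)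
    (M : ℝ)
    (hM : ∀ n, (∫ x, (energyDensity (φ n) x + (nsq ((φ n).toFun x - northPole)) ^ 3)) ≤ M) :
    ¬ ∀ R > (0 : ℝ), Tendsto (fun n => ⨆ y : R3,
        ∫ x in eball y R,
          (energyDensity (φ n) x + (nsq ((φ n).toFun x - northPole)) ^ 3))
      atTop (𝓝 0) := by
  intro hvan
  have hf : ∀ n, Integrable (fden (φ n)) := hint
  have hM' : ∀ n, ∫ x, fden (φ n) x ≤ M := hM
  have hM0 : 0 ≤ M := (integral_nonneg (fden_nonneg (φ 0))).trans (hM' 0)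
  set K : ℝ := 2 * π ^ 2 * |(k : ℝ)| with hK
  have hk' : (k : ℝ) ≠ 0 := by exact_mod_cast hk
  have hK0 : 0 < K := by have := abs_pos.2 hk'; positivity
  have hD : ∀ n, |∫ x, detDen (φ n) x| = K := by
    intro n
    have h := hdeg n
    unfold degree at h
    have : ∫ x, detDen (φ n) x = 2 * π ^ 2 * k := by
      rw [← h]; field_simp
    rw [this, abs_mul, abs_of_nonneg (by positivity : (0:ℝ) ≤ 2 * π ^ 2)]
  set lam : ℝ := K / (8 * (M + 1)) with hlam
  have hl : 0 < lam := by positivity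
  have hlM : lam * M ≤ K / 8 := by
    rw [hlam, div_mul_eq_mul_div, div_le_div_iff₀ (by positivity) (by norm_num)]
    nlinarith
  set r : ℝ := Real.sqrt (lam ^ 4 / 3456) with hr'
  have hr : 0 < r := Real.sqrt_pos.2 (by positivity)
  have hrr : r ^ 2 = lam ^ 4 / 3456 := Real.sq_sqrt (by positivity)
  have hc : lam + 1152 / lam ^ 3 * (3 * r ^ 2) = 2 * lam := by
    rw [hrr]; field_simp; ring
  set mu : ℝ := lam / 3 with hmu
  have hm : 0 < mu := by positivity
  set b := (volume (eball 0 r)).toReal with hb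
  have hb0 : 0 < b := ENNReal.toReal_pos (eball_vol_pos hr).ne' (eball_vol_lt hr).ne
  have hT : Tendsto (fun n => ⨆ y : R3, ∫ x in eball y r, fden (φ n) x) atTop (𝓝 0) := hvan r hr
  have key : ∀ n, b * K ≤ (mu * b + 1 / mu ^ 2 * ⨆ y : R3, ∫ x in eball y r, fden (φ n) x)
      * (3 * M) + (2 * lam) * M * b := by
    intro n
    have := final_est (hX n) (hf n) (hM' n) hr hl hm
    rw [hD n, hc] at this
    exact this
  have lim := (((hT.const_mul (1 / mu ^ 2)).const_add (mu * b)).mul_const (3 * M)).add_const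
    ((2 * lam) * M * b)
  have fin := ge_of_tendsto' lim key
  have h1 : (mu * b + 1 / mu ^ 2 * 0) * (3 * M) + 2 * lam * M * b = 3 * (lam * M) * b := by
    rw [hmu]; ring
  rw [h1] at fin
  nlinarith [mul_le_mul_of_nonneg_right hlM hb0.le, mul_pos hK0 hb0]
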